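/- arXiv:0710.1412 — 11 statements merged into one kernel-verified Lean document; each statement's English description precedes it below -/
import Mathlib

section
/- Let G be a group. If the abelianization G/[G,G] is infinite, then G is unbounded, i.e., G admits an unbounded conjugation-invariant norm. -/
/-- A conjugation-invariant norm on a group `G`. -/
def IsConjInvNorm {G : Type*} [Group G] (ν : G → ℝ) : Prop :=
  ν 1 = 0 ∧ (∀ f : G, 0 ≤ ν f) ∧ (∀ f : G, ν f⁻¹ = ν f) ∧
    (∀ f g : G, ν (f * g) ≤ ν f + ν g) ∧ (∀ f g : G, ν (g * f * g⁻¹) = ν f) ∧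
    (∀ f : G, f ≠ 1 → 0 < ν f)

/-!
A countable subgroup of an infinite abelian group `A` embeds in a countable divisible group, and the
embedding extends to all of `A`; starting from an infinite subgroup, this gives a countably infinite
quotient of `A`. Enumerating the elements of a countable group as generators of increasing weight
gives a word length with finite balls, which is unbounded when the group is infinite. So `G` maps
onto a countably infinite abelian group, and the pullback of such a length is conjugation-invariant
because the target is abelian; adding the discrete norm makes it positive away from the identity.
-/

section WeightedWordLength

variable {G : Type*} [Group G] {w : G → ℕ}

/-- The word length on a group in which every element is a generator, the letter `g` having weight
`w g`: the least total weight of a list with product `g`. -/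
noncomputable def weightedWordLength (w : G → ℕ) (g : G) : ℕ :=
  sInf {n | ∃ l : List G, l.prod = g ∧ (l.map w).sum = n}

theorem weightedWordLength_prod_le (w : G → ℕ) (l : List G) :
    weightedWordLength w l.prod ≤ (l.map w).sum :=
  Nat.sInf_le ⟨l, rfl, rfl⟩

theorem exists_list_sum_eq_weightedWordLength (w : G → ℕ) (g : G) :
    ∃ l : List G, l.prod = g ∧ (l.map w).sum = weightedWordLength w g :=
  Nat.sInf_mem (s := {n | ∃ l : List G, l.prod = g ∧ (l.map w).sum = n})
    ⟨_, [g], List.prod_singleton, rfl⟩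

theorem weightedWordLength_one (w : G → ℕ) : weightedWordLength w 1 = 0 :=
  Nat.le_zero.mp (weightedWordLength_prod_le w [])

theorem weightedWordLength_mul_le (w : G → ℕ) (g h : G) :
    weightedWordLength w (g * h) ≤ weightedWordLength w g + weightedWordLength w h := by
  obtain ⟨l, rfl, hl⟩ := exists_list_sum_eq_weightedWordLength w g
  obtain ⟨m, rfl, hm⟩ := exists_list_sum_eq_weightedWordLength w h
  simpa [hl, hm] using weightedWordLength_prod_le w (l ++ m)

theorem weightedWordLength_inv_le (hw : ∀ g, w g⁻¹ = w g) (g : G) :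
    weightedWordLength w g⁻¹ ≤ weightedWordLength w g := by
  obtain ⟨l, rfl, hl⟩ := exists_list_sum_eq_weightedWordLength w g
  have hword := weightedWordLength_prod_le w (l.map (·⁻¹)).reverse
  rw [← List.prod_inv_reverse] at hword
  simpa [Function.comp_def, hw, hl] using hword

theorem weightedWordLength_inv (hw : ∀ g, w g⁻¹ = w g) (g : G) :
    weightedWordLength w g⁻¹ = weightedWordLength w g :=
  (weightedWordLength_inv_le hw g).antisymm <| by
    simpa using weightedWordLength_inv_le hw g⁻¹

/-- `weightedWordLength` as a real-valued seminorm, for a weight invariant under inversion. -/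
noncomputable def weightedWordSeminorm (w : G → ℕ) (hw : ∀ g, w g⁻¹ = w g) : GroupSeminorm G where
  toFun g := weightedWordLength w g
  map_one' := mod_cast weightedWordLength_one w
  mul_le' g h := mod_cast weightedWordLength_mul_le w g h
  inv' g := mod_cast weightedWordLength_inv hw g

end WeightedWordLength

theorem finite_setOf_list_map_sum_le {α : Type*} {w : α → ℕ} (hpos : ∀ a, 0 < w a)
    (hfin : ∀ n, {a | w a ≤ n}.Finite) (n : ℕ) : {l : List α | (l.map w).sum ≤ n}.Finite := by
  induction n with
  | zero =>
    refine (Set.finite_singleton []).subset fun l hl ↦ ?_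
    cases l with
    | nil => rfl
    | cons a l =>
      simp only [Set.mem_ofPred_eq, List.map_cons, List.sum_cons] at hl
      have := hpos a
      omega
  | succ n ih =>
    refine ((Set.finite_singleton []).union ((hfin (n + 1)).image2 List.cons ih)).subset
      fun l hl ↦ ?_
    cases l with
    | nil => exact .inl rfl
    | cons a l =>
      simp only [Set.mem_ofPred_eq, List.map_cons, List.sum_cons] at hl
      have := hpos a
      exact .inr ⟨a, show w a ≤ n + 1 by omega, l, show (l.map w).sum ≤ n by omega, rfl⟩

theorem finite_setOf_weightedWordLength_le {G : Type*} [Group G] {w : G → ℕ} (hpos : ∀ g, 0 < w g)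
    (hfin : ∀ n, {g | w g ≤ n}.Finite) (n : ℕ) : {g | weightedWordLength w g ≤ n}.Finite := by
  refine ((finite_setOf_list_map_sum_le hpos hfin n).image List.prod).subset fun g hg ↦ ?_
  obtain ⟨l, hprod, hsum⟩ := exists_list_sum_eq_weightedWordLength w g
  exact ⟨l, hsum.trans_le hg, hprod⟩

theorem exists_groupSeminorm_finite_setOf_le (G : Type*) [Group G] [Countable G] :
    ∃ p : GroupSeminorm G, ∀ r : ℝ, {g | p g ≤ r}.Finite := by
  obtain ⟨e, he⟩ := exists_injective_nat G
  let w (g : G) : ℕ := e g + e g⁻¹ + 1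
  have hfin (n : ℕ) : {g | w g ≤ n}.Finite :=
    ((Set.finite_Iic n).preimage he.injOn).subset fun g (hg : e g + e g⁻¹ + 1 ≤ n) ↦
      show e g ≤ n by omega
  refine ⟨weightedWordSeminorm w fun g ↦ by simp only [w, inv_inv, add_comm (e g)], fun r ↦ ?_⟩
  exact (finite_setOf_weightedWordLength_le (fun _ ↦ Nat.succ_pos _) hfin ⌊r⌋₊).subset
    fun g hg ↦ Nat.le_floor hg

/-- Divisibility of rational vector spaces, with `v / n` given by `n⁻¹ • v`. -/
noncomputable abbrev divisibleByIntOfModuleRat (V : Type*) [AddCommGroup V] [Module ℚ V] :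
    DivisibleBy V ℤ where
  div v n := (n : ℚ)⁻¹ • v
  div_zero v := by simp only [Int.cast_zero, inv_zero, zero_smul]
  div_cancel v hn := by
    rw [← Int.cast_smul_eq_zsmul ℚ]
    exact smul_inv_smul₀ (Int.cast_ne_zero.mpr hn) v

theorem baer_int_quotient {V : Type*} [AddCommGroup V] [DivisibleBy V ℤ] (K : AddSubgroup V) :
    Module.Baer ℤ (V ⧸ K) :=
  let _ : DivisibleBy (V ⧸ K) ℤ :=
    (QuotientAddGroup.mk'_surjective K).divisibleBy _ fun v n ↦ map_zsmul _ n v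
  Module.Baer.of_divisible _

theorem exists_extension_to_quotient_map_ker {F V A : Type*} [AddCommGroup F] [AddCommGroup V]
    [DivisibleBy V ℤ] [AddCommGroup A] (j : F →+ V) (ψ : F →+ A) :
    ∃ φ : A →+ V ⧸ ψ.ker.map j, ∀ x, φ (ψ x) = j x := by
  let q := (QuotientAddGroup.mk' (ψ.ker.map j)).comp j
  have hker : ψ.rangeRestrict.ker ≤ q.ker := fun x hx ↦ by
    rw [AddMonoidHom.ker_rangeRestrict] at hx
    exact (QuotientAddGroup.eq_zero_iff _).mpr (AddSubgroup.mem_map_of_mem j hx)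
  let χ := ψ.rangeRestrict.liftOfSurjective ψ.rangeRestrict_surjective ⟨q, hker⟩
  obtain ⟨φ, hφ⟩ := (baer_int_quotient (ψ.ker.map j)).extension_property_addMonoidHom
    ψ.range.subtype ψ.range.subtype_injective χ
  refine ⟨φ, fun x ↦ ?_⟩
  calc φ (ψ x) = χ (ψ.rangeRestrict x) := DFunLike.congr_fun hφ (ψ.rangeRestrict x)
    _ = j x := AddMonoidHom.liftOfRightInverse_comp_apply _ _ _ _ x

theorem exists_addMonoidHom_infinite_range (A : Type*) [AddCommGroup A] [Infinite A] :
    ∃ (K : AddSubgroup (ℕ →₀ ℚ)) (φ : A →+ (ℕ →₀ ℚ) ⧸ K), (Set.range φ).Infinite := by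
  let e := Infinite.natEmbedding A
  let j : (ℕ →₀ ℤ) →+ (ℕ →₀ ℚ) := Finsupp.mapRange.addMonoidHom (Int.castAddHom ℚ)
  let ψ : (ℕ →₀ ℤ) →+ A := (Finsupp.linearCombination ℤ e).toAddMonoidHom
  have hj : Function.Injective j := Finsupp.mapRange_injective _ Int.cast_zero Int.cast_injective
  have hψ (i : ℕ) : ψ (Finsupp.single i 1) = e i := by simp [ψ]
  let _ : DivisibleBy (ℕ →₀ ℚ) ℤ := divisibleByIntOfModuleRat _
  obtain ⟨φ, hφ⟩ := exists_extension_to_quotient_map_ker j ψ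
  have hφψ (x y : ℕ →₀ ℤ) (h : φ (ψ x) = φ (ψ y)) : ψ x = ψ y := by
    rw [hφ, hφ, QuotientAddGroup.eq, ← map_neg, ← map_add,
      AddSubgroup.mem_map_iff_mem hj, AddMonoidHom.mem_ker, map_add, map_neg] at h
    exact neg_add_eq_zero.mp h
  have hφe : Function.Injective (φ ∘ e) := fun i k h ↦ e.injective <| by
    simp only [Function.comp_apply, ← hψ] at h ⊢
    exact hφψ _ _ h
  exact ⟨_, φ, (Set.infinite_range_of_injective hφe).mono (Set.range_comp_subset_range e φ)⟩

theorem exists_countable_infinite_quotient (A : Type*) [CommGroup A] [Infinite A] :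
    ∃ H : Subgroup A, Countable (A ⧸ H) ∧ Infinite (A ⧸ H) := by
  obtain ⟨K, φ, hφ⟩ := exists_addMonoidHom_infinite_range (Additive A)
  let f : A →* Multiplicative ((ℕ →₀ ℚ) ⧸ K) := AddMonoidHom.toMultiplicativeRight φ
  have : Countable (Multiplicative ((ℕ →₀ ℚ) ⧸ K)) :=
    (QuotientAddGroup.mk_surjective (s := K)).countable
  have : Infinite f.range := hφ.to_subtype
  let quotientEquiv := (QuotientGroup.quotientKerEquivRange f).toEquiv
  exact ⟨f.ker, quotientEquiv.countable_iff.mpr inferInstance,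
    quotientEquiv.infinite_iff.mpr inferInstance⟩

theorem isConjInvNorm_add_one {G : Type*} [Group G] [DecidableEq G] (p : GroupSeminorm G)
    (hp : ∀ f g, p (g * f * g⁻¹) = p f) : IsConjInvNorm ⇑(p + 1) := by
  refine ⟨map_one_eq_zero _, apply_nonneg _, map_inv_eq_map _, map_mul_le_add _, fun f g ↦ ?_,
    fun f hf ↦ ?_⟩
  · simp only [add_apply, GroupSeminorm.apply_one, hp, conj_eq_one_iff]
  · rw [add_apply, GroupSeminorm.apply_one, if_neg hf]
    exact add_pos_of_nonneg_of_pos (apply_nonneg p f) one_pos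

theorem exists_unbounded_isConjInvNorm_of_surjective {G B : Type*} [Group G] [CommGroup B]
    [Countable B] [Infinite B] (f : G →* B) (hf : Function.Surjective f) :
    ∃ ν : G → ℝ, IsConjInvNorm ν ∧ ∀ C : ℝ, ∃ g : G, C < ν g := by
  classical
  obtain ⟨p, hp⟩ := exists_groupSeminorm_finite_setOf_le B
  refine ⟨⇑(p.comp f + 1), isConjInvNorm_add_one _ fun g h ↦ ?_, fun C ↦ ?_⟩
  · simp only [GroupSeminorm.comp_apply, map_mul, map_inv, mul_inv_cancel_comm]
  · obtain ⟨b, hb⟩ := (hp C).exists_notMem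
    obtain ⟨g, rfl⟩ := hf b
    exact ⟨g, (not_le.mp hb).trans_le <|
      le_add_of_nonneg_right (apply_nonneg (1 : GroupSeminorm G) g)⟩

/-- If the abelianization of `G` is infinite, then `G` admits an unbounded
conjugation-invariant norm. -/
theorem unbounded_of_infinite_abelianization {G : Type*} [Group G]
    (h : Infinite (Abelianization G)) :
    ∃ ν : G → ℝ, IsConjInvNorm ν ∧ ∀ C : ℝ, ∃ g : G, C < ν g := by
  obtain ⟨H, _, _⟩ := exists_countable_infinite_quotient (Abelianization G)
  exact exists_unbounded_isConjInvNorm_of_surjective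
    ((QuotientGroup.mk' H).comp Abelianization.of)
    ((QuotientGroup.mk'_surjective H).comp (QuotientGroup.mk'_surjective _))
end

section
/- Every infinite abelian group admits an unbounded conjugation-invariant norm. -/
/-!
A countable group carries a norm with finite balls, and such a norm is unbounded on every infinite
subset. An infinite abelian group has a countably infinite subgroup, which embeds in a countable
divisible group `D`; divisibility extends this embedding to a homomorphism from the whole group
to `D`, still with infinite image. Pulling back a norm on `D` with finite balls gives an unbounded
seminorm, and adding the discrete norm makes it positive away from the identity.

A seminorm pulled back from an abelian group is conjugation-invariant, so the argument only needs
the abelianization to be infinite.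
-/

open scoped Pointwise

universe u

section FiniteBalls

variable {G : Type*} [Group G]

/-- The increasing sequence of subsets `Bₙ` of a group with `B₀ = {1}` and
`Bₙ₊₁ = Bₙ Bₙ ∪ {xₙ, xₙ⁻¹}`. When `x` enumerates the group, these are the balls of an
integer-valued norm. -/
def productExhaustion (x : ℕ → G) : ℕ → Set G
  | 0 => {1}
  | n + 1 => productExhaustion x n * productExhaustion x n ∪ {x n, (x n)⁻¹}

theorem mul_mem_productExhaustion_succ {x : ℕ → G} {n : ℕ} {g h : G}
    (hg : g ∈ productExhaustion x n) (hh : h ∈ productExhaustion x n) :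
    g * h ∈ productExhaustion x (n + 1) :=
  Or.inl (Set.mul_mem_mul hg hh)

theorem one_mem_productExhaustion (x : ℕ → G) (n : ℕ) : 1 ∈ productExhaustion x n := by
  induction n with
  | zero => rfl
  | succ n ih => simpa only [mul_one] using mul_mem_productExhaustion_succ ih ih

theorem monotone_productExhaustion (x : ℕ → G) : Monotone (productExhaustion x) :=
  monotone_nat_of_le_succ fun n g hg ↦ by
    simpa only [mul_one] using mul_mem_productExhaustion_succ hg (one_mem_productExhaustion x n)

theorem inv_mem_productExhaustion {x : ℕ → G} {n : ℕ} {g : G}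
    (hg : g ∈ productExhaustion x n) : g⁻¹ ∈ productExhaustion x n := by
  induction n generalizing g with
  | zero => exact inv_eq_one.2 hg
  | succ n ih =>
    rcases hg with ⟨a, ha, b, hb, rfl⟩ | rfl | rfl
    · simpa only [mul_inv_rev] using mul_mem_productExhaustion_succ (ih hb) (ih ha)
    · exact Or.inr (Or.inr rfl)
    · exact Or.inr (Or.inl (inv_inv _))

theorem finite_productExhaustion (x : ℕ → G) (n : ℕ) : (productExhaustion x n).Finite := by
  induction n with
  | zero => exact Set.finite_singleton 1
  | succ n ih => exact (ih.mul ih).union (Set.toFinite _)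

theorem exists_groupNorm_le_natCast_iff {B : ℕ → Set G} (zero : B 0 = {1}) (mono : Monotone B)
    (inv : ∀ n, ∀ g ∈ B n, g⁻¹ ∈ B n) (mul : ∀ n, ∀ g ∈ B n, ∀ h ∈ B n, g * h ∈ B (n + 1))
    (exhaust : ∀ g, ∃ n, g ∈ B n) :
    ∃ p : GroupNorm G, ∀ g (n : ℕ), p g ≤ n ↔ g ∈ B n := by
  classical
  let ℓ (g : G) : ℕ := Nat.find (exhaust g)
  have mem_ℓ (g) : g ∈ B (ℓ g) := Nat.find_spec (exhaust g)
  have ℓ_le_iff (g) (n : ℕ) : ℓ g ≤ n ↔ g ∈ B n :=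
    ⟨fun hn ↦ mono hn (mem_ℓ g), Nat.find_min' (exhaust g)⟩
  have ℓ_eq_zero_iff (g) : ℓ g = 0 ↔ g = 1 := by
    rw [← Nat.le_zero, ℓ_le_iff, zero, Set.mem_singleton_iff]
  have ℓ_inv_le (g) : ℓ g⁻¹ ≤ ℓ g := (ℓ_le_iff _ _).2 (inv _ g (mem_ℓ g))
  have ℓ_mul_le_max (g h) : ℓ (g * h) ≤ max (ℓ g) (ℓ h) + 1 :=
    (ℓ_le_iff _ _).2 <| mul _ _ (mono (le_max_left _ _) (mem_ℓ g)) _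
      (mono (le_max_right _ _) (mem_ℓ h))
  -- If neither factor is trivial, the smaller level absorbs the extra `1`.
  have ℓ_mul_le (g h) : ℓ (g * h) ≤ ℓ g + ℓ h := by
    rcases eq_or_ne g 1 with rfl | hg
    · simp only [one_mul, le_add_iff_nonneg_left, zero_le]
    rcases eq_or_ne h 1 with rfl | hh
    · simp only [mul_one, le_add_iff_nonneg_right, zero_le]
    have := ℓ_mul_le_max g h
    have := (ℓ_eq_zero_iff g).not.2 hg
    have := (ℓ_eq_zero_iff h).not.2 hh
    omega
  let p : GroupNorm G :=
    { toFun g := ℓ g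
      map_one' := mod_cast (ℓ_eq_zero_iff 1).2 rfl
      mul_le' g h := mod_cast ℓ_mul_le g h
      inv' g := mod_cast (ℓ_inv_le g).antisymm (by simpa only [inv_inv] using ℓ_inv_le g⁻¹)
      eq_one_of_map_eq_zero' g hg := (ℓ_eq_zero_iff g).1 (mod_cast hg) }
  exact ⟨p, fun g n ↦ Nat.cast_le.trans (ℓ_le_iff g n)⟩

theorem exists_groupNorm_finite_closedBall [Countable G] :
    ∃ p : GroupNorm G, ∀ r : ℝ, {g | p g ≤ r}.Finite := by
  obtain ⟨x, hx⟩ := exists_surjective_nat G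
  obtain ⟨p, hp⟩ := exists_groupNorm_le_natCast_iff rfl (monotone_productExhaustion x)
    (fun _ _ ↦ inv_mem_productExhaustion)
    (fun _ _ hg _ hh ↦ mul_mem_productExhaustion_succ hg hh)
    (hx.forall.2 fun n ↦ ⟨n + 1, Or.inr (Or.inl rfl)⟩)
  refine ⟨p, fun r ↦ (finite_productExhaustion x ⌈r⌉₊).subset fun g (hg : p g ≤ r) ↦ ?_⟩
  exact (hp g _).1 (hg.trans (Nat.le_ceil r))

end FiniteBalls

section DivisibleExtension

theorem injective_mapQ_map {R M N : Type*} [Ring R] [AddCommGroup M] [Module R M]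
    [AddCommGroup N] [Module R N] (K : Submodule R M) {f : M →ₗ[R] N}
    (hf : Function.Injective f) :
    Function.Injective (K.mapQ (K.map f) f (Submodule.le_comap_map f K)) := by
  rw [← LinearMap.ker_eq_bot, Submodule.ker_mapQ, Submodule.comap_map_eq_of_injective hf,
    Submodule.mkQ_map_self]

theorem baer_int_quotient_of_module_rat {V : Type*} [AddCommGroup V] [Module ℚ V]
    (K : Submodule ℤ V) : Module.Baer ℤ (V ⧸ K) := by
  let : DivisibleBy (V ⧸ K) ℤ := divisibleByOfSMulRightSurj _ _ fun {n} hn ↦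
    K.mkQ_surjective.forall.2 fun v ↦ ⟨K.mkQ ((n : ℚ)⁻¹ • v), by
      have smul_inv_smul : n • (n : ℚ)⁻¹ • v = v := by
        rw [← Int.cast_smul_eq_zsmul ℚ, smul_inv_smul₀ (Int.cast_ne_zero.2 hn)]
      exact (map_zsmul K.mkQ _ _).symm.trans (congrArg K.mkQ smul_inv_smul)⟩
  exact .of_divisible _

theorem exists_injective_hom_countable_baer (A : Type u) [AddCommGroup A] [Countable A] :
    ∃ (D : Type u) (_ : AddCommGroup D) (ι : A →+ D),
      Countable D ∧ Module.Baer ℤ D ∧ Function.Injective ι := by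
  -- With `A = F / K` for a free abelian group `F`, take `D = (F ⊗ ℚ) / K`.
  let π : (A →₀ ℤ) →ₗ[ℤ] A := Finsupp.linearCombination ℤ id
  have hπ : Function.Surjective π := Finsupp.linearCombination_id_surjective ℤ A
  let i : (A →₀ ℤ) →ₗ[ℤ] (A →₀ ℚ) :=
    Finsupp.mapRange.linearMap (Int.castAddHom ℚ).toIntLinearMap
  have hi : Function.Injective i := Finsupp.mapRange_injective _ Int.cast_zero Int.cast_injective
  let K := π.ker
  let j := K.mapQ (K.map i) i (Submodule.le_comap_map i K)
  have hj : Function.Injective j := injective_mapQ_map K hi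
  let e := π.quotKerEquivOfSurjective hπ
  exact ⟨(A →₀ ℚ) ⧸ K.map i, inferInstance, (j ∘ₗ e.symm.toLinearMap).toAddMonoidHom,
    Quotient.countable, baer_int_quotient_of_module_rat _, hj.comp e.symm.injective⟩

theorem exists_submodule_countable_infinite (R M : Type*) [Semiring R] [Countable R]
    [AddCommMonoid M] [Module R M] [Infinite M] :
    ∃ S : Submodule R M, Countable S ∧ Infinite S := by
  let x := Infinite.natEmbedding M
  have hx : (Set.range x).Infinite := Set.infinite_range_of_injective x.injective
  exact ⟨.span R (Set.range x), inferInstance, (hx.mono Submodule.subset_span).to_subtype⟩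

theorem exists_hom_countable_infinite_range (A : Type u) [AddCommGroup A] [Infinite A] :
    ∃ (D : Type u) (_ : AddCommGroup D) (φ : A →+ D), Countable D ∧ (Set.range φ).Infinite := by
  obtain ⟨S, _, _⟩ := exists_submodule_countable_infinite ℤ A
  obtain ⟨D, _, ι, hD, hBaer, hι⟩ := exists_injective_hom_countable_baer S
  obtain ⟨φ, hφ⟩ := hBaer.extension_property_addMonoidHom
    S.subtype.toAddMonoidHom S.subtype_injective ι
  refine ⟨D, inferInstance, φ, hD, (Set.infinite_range_of_injective hι).mono ?_⟩
  rw [← hφ, AddMonoidHom.coe_comp]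
  exact Set.range_comp_subset_range _ _

end DivisibleExtension

theorem exists_groupSeminorm_unbounded (G : Type*) [CommGroup G] [Infinite G] :
    ∃ q : GroupSeminorm G, ∀ C : ℝ, ∃ g, C < q g := by
  obtain ⟨D, _, φ, _, hφ⟩ := exists_hom_countable_infinite_range (Additive G)
  have : Countable (Multiplicative D) := Multiplicative.toAdd.injective.countable
  obtain ⟨p, hp⟩ := exists_groupNorm_finite_closedBall (G := Multiplicative D)
  refine ⟨p.toGroupSeminorm.comp φ.toMultiplicativeRight, fun C ↦ ?_⟩
  by_contra! hC
  exact hφ ((hp C).subset (Set.range_subset_iff.2 hC))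

open Classical in
theorem isConjInvNorm_comp_add_one {G A : Type*} [Group G] [CommGroup A] (q : GroupSeminorm A)
    (φ : G →* A) : IsConjInvNorm ⇑(q.comp φ + 1) := by
  refine ⟨map_one_eq_zero _, apply_nonneg _, map_inv_eq_map _, map_mul_le_add _, ?_, ?_⟩
  · intro f g
    simp only [add_apply, GroupSeminorm.comp_apply, GroupSeminorm.apply_one,
      map_mul, map_inv, mul_inv_cancel_comm, conj_eq_one_iff]
  · intro f hf
    rw [add_apply, GroupSeminorm.apply_one, if_neg hf]
    exact add_pos_of_nonneg_of_pos (apply_nonneg _ f) one_pos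

theorem infinite_abelian_admits_unbounded_norm_general (G : Type*) [Group G]
    [Infinite (Abelianization G)] :
    ∃ ν : G → ℝ, IsConjInvNorm ν ∧ ∀ C : ℝ, ∃ g : G, C < ν g := by
  classical
  obtain ⟨q, hq⟩ := exists_groupSeminorm_unbounded (Abelianization G)
  refine ⟨_, isConjInvNorm_comp_add_one q Abelianization.of, fun C ↦ ?_⟩
  obtain ⟨a, ha⟩ := hq C
  obtain ⟨g, rfl⟩ := QuotientGroup.mk_surjective a
  exact ⟨g, lt_add_of_lt_of_nonneg ha (apply_nonneg (1 : GroupSeminorm G) g)⟩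

/-- Every infinite abelian group admits an unbounded conjugation-invariant norm. -/
theorem infinite_abelian_admits_unbounded_norm (G : Type*) [CommGroup G] [Infinite G] :
    ∃ ν : G → ℝ, IsConjInvNorm ν ∧ ∀ C : ℝ, ∃ g : G, C < ν g :=
  have : Infinite (Abelianization G) := Abelianization.equivOfComm.toEquiv.infinite_iff.1 ‹_›
  infinite_abelian_admits_unbounded_norm_general G
end

section
/- Let G be a group. If the commutator length cl_G is unbounded on the commutator subgroup [G,G], then G itself is unbounded, i.e., G admits an unbounded conjugation-invariant norm. -/
/-!
Exhaust `G` by proper subsets `L 0 ⊆ L 1 ⊆ ⋯`, each stable under inversion and conjugation, with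
`L m * L n ⊆ L (m + n)`. The least `n` with `x ∈ L n`, plus one off the identity, is then an
unbounded conjugation-invariant norm.

If `Gᵃᵇ` is infinite, such an exhaustion is pulled back from `Gᵃᵇ`: an infinite abelian group `A`
has a nontrivial real character, or is exhausted by its proper torsion subgroups `A[n!]`, or has an
infinite quotient `A/pA`, a vector space which is exhausted by the vectors with at most `n` nonzero
coordinates. If `Gᵃᵇ` is finite, let `T ∋ 1` be finite and symmetric with image `Gᵃᵇ`, and let `C`
be the set of commutators. A conjugate `g t g⁻¹ = t [t⁻¹, g]` lies in `T C`, and `T C = C T`, so a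
product of `n` conjugates of elements of `T ∪ C` lies in `Tⁿ Cⁿ`. As `Tⁿ` is finite, commutator
length is bounded on `Tⁿ Cⁿ ∩ [G, G]`, hence `Tⁿ Cⁿ ≠ G`.
-/

open scoped commutatorElement

/-- `x` is a product of `n` commutators of elements of `G`. -/
def IsProdOfNCommutators {G : Type*} [Group G] (x : G) (n : ℕ) : Prop :=
  ∃ f g : Fin n → G, x = (List.ofFn fun i => ⁅f i, g i⁆).prod

open scoped Pointwise

/-- An exhaustion of `G` by conjugation-invariant symmetric proper subsets, additive in the index:
the balls of an unbounded conjugation-invariant pseudonorm with values in `ℕ`. Unlike a norm, it can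
be pulled back along a surjective homomorphism. -/
structure UnboundedFiltration (G : Type*) [Group G] where
  level : ℕ → Set G
  one_mem : ∀ n, 1 ∈ level n
  inv_mem : ∀ {n x}, x ∈ level n → x⁻¹ ∈ level n
  mul_mem : ∀ {m n x y}, x ∈ level m → y ∈ level n → x * y ∈ level (m + n)
  conj_mem : ∀ {n x}, x ∈ level n → ∀ g, g * x * g⁻¹ ∈ level n
  exists_mem : ∀ x, ∃ n, x ∈ level n
  exists_notMem : ∀ n, ∃ x, x ∉ level n

namespace UnboundedFiltration

section Norm

variable {G : Type*} [Group G] (F : UnboundedFiltration G)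

theorem level_mono : Monotone F.level := fun m n hmn x hx => by
  simpa [Nat.add_sub_cancel' hmn] using F.mul_mem hx (F.one_mem (n - m))

/-- The pseudonorm whose balls are the levels of `F`. -/
noncomputable def depth (x : G) : ℕ :=
  sInf {n | x ∈ F.level n}

theorem depth_le_iff {x : G} {n : ℕ} : F.depth x ≤ n ↔ x ∈ F.level n :=
  ⟨fun h => F.level_mono h (Nat.sInf_mem (F.exists_mem x)), fun h => Nat.sInf_le h⟩

theorem mem_level_depth (x : G) : x ∈ F.level (F.depth x) :=
  F.depth_le_iff.1 le_rfl

theorem depth_mul_le (x y : G) : F.depth (x * y) ≤ F.depth x + F.depth y :=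
  F.depth_le_iff.2 (F.mul_mem (F.mem_level_depth x) (F.mem_level_depth y))

theorem depth_inv (x : G) : F.depth x⁻¹ = F.depth x := by
  have inv_le (y : G) : F.depth y⁻¹ ≤ F.depth y :=
    F.depth_le_iff.2 (F.inv_mem (F.mem_level_depth y))
  exact (inv_le x).antisymm (by simpa using inv_le x⁻¹)

theorem depth_conj (x g : G) : F.depth (g * x * g⁻¹) = F.depth x := by
  have conj_le (y h : G) : F.depth (h * y * h⁻¹) ≤ F.depth y :=
    F.depth_le_iff.2 (F.conj_mem (F.mem_level_depth y) h)
  exact (conj_le x g).antisymm (by simpa [mul_assoc] using conj_le (g * x * g⁻¹) g⁻¹)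

open scoped Classical in
/-- The norm associated with `F`: adding `1` off the identity makes the pseudonorm `depth`
positive there. -/
noncomputable def norm (x : G) : ℝ :=
  if x = 1 then 0 else F.depth x + 1

theorem norm_one : F.norm 1 = 0 :=
  if_pos rfl

theorem norm_of_ne_one {x : G} (hx : x ≠ 1) : F.norm x = F.depth x + 1 :=
  if_neg hx

theorem norm_nonneg (x : G) : 0 ≤ F.norm x := by
  unfold norm
  split_ifs <;> positivity

theorem norm_mul_le (x y : G) : F.norm (x * y) ≤ F.norm x + F.norm y := by
  rcases eq_or_ne x 1 with rfl | hx
  · simp [norm_one]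
  rcases eq_or_ne y 1 with rfl | hy
  · simp [norm_one]
  rcases eq_or_ne (x * y) 1 with hxy | hxy
  · rw [hxy, norm_one]
    exact add_nonneg (F.norm_nonneg x) (F.norm_nonneg y)
  have hdepth : (F.depth (x * y) : ℝ) ≤ F.depth x + F.depth y := by
    exact_mod_cast F.depth_mul_le x y
  rw [F.norm_of_ne_one hx, F.norm_of_ne_one hy, F.norm_of_ne_one hxy]
  linarith

theorem norm_pos {x : G} (hx : x ≠ 1) : 0 < F.norm x := by
  rw [F.norm_of_ne_one hx]
  positivity

theorem norm_inv (x : G) : F.norm x⁻¹ = F.norm x := by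
  classical simp only [norm, inv_eq_one, F.depth_inv]

theorem norm_conj (x g : G) : F.norm (g * x * g⁻¹) = F.norm x := by
  classical simp only [norm, conj_eq_one_iff, F.depth_conj]

theorem isConjInvNorm_norm : IsConjInvNorm F.norm :=
  ⟨F.norm_one, F.norm_nonneg, F.norm_inv, F.norm_mul_le, F.norm_conj, fun _ => F.norm_pos⟩

theorem exists_lt_norm (C : ℝ) : ∃ x, C < F.norm x := by
  obtain ⟨n, hn⟩ := exists_nat_gt C
  obtain ⟨x, hx⟩ := F.exists_notMem n
  have hx_ne : x ≠ 1 := fun h => hx (h ▸ F.one_mem n)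
  have hdepth : (n : ℝ) < F.depth x := by
    exact_mod_cast not_le.1 (mt F.depth_le_iff.1 hx)
  refine ⟨x, ?_⟩
  rw [F.norm_of_ne_one hx_ne]
  linarith

end Norm

/-- The filtration of `G` by the preimages of the levels of a filtration of a quotient of `G`. -/
def comap {G H : Type*} [Group G] [Group H] (F : UnboundedFiltration H) (f : G →* H)
    (hf : Function.Surjective f) : UnboundedFiltration G where
  level n := f ⁻¹' F.level n
  one_mem n := by simpa using F.one_mem n
  inv_mem hx := by simpa using F.inv_mem hx
  mul_mem hx hy := by simpa using F.mul_mem hx hy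
  conj_mem hx g := by simpa using F.conj_mem hx (f g)
  exists_mem x := F.exists_mem (f x)
  exists_notMem n := hf.exists.1 (F.exists_notMem n)

/-- The filtration by the sizes of the values of a nontrivial real character. -/
def ofRealHom {G : Type*} [Group G] (f : G →* Multiplicative ℝ) (hf : f ≠ 1) :
    UnboundedFiltration G where
  level n := {x | |(f x).toAdd| ≤ n}
  one_mem n := by simp
  inv_mem hx := by simpa using hx
  mul_mem {m n x y} hx hy := by
    simpa using (abs_add_le (f x).toAdd (f y).toAdd).trans (add_le_add hx hy)
  conj_mem hx g := by simpa using hx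
  exists_mem x := exists_nat_ge |(f x).toAdd|
  exists_notMem n := by
    obtain ⟨x, hx⟩ := DFunLike.ne_iff.1 hf
    have hpos : 0 < |(f x).toAdd| := abs_pos.2 fun h => hx (Multiplicative.toAdd.injective h)
    obtain ⟨k, hk⟩ := Archimedean.arch ((n : ℝ) + 1) hpos
    refine ⟨x ^ k, ?_⟩
    simp only [nsmul_eq_mul] at hk
    simp only [Set.mem_ofPred_eq, map_pow, toAdd_pow, nsmul_eq_mul, abs_mul, Nat.abs_cast, not_le]
    linarith

/-- The filtration of a free module by the number of nonzero coordinates. -/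
def ofBasis {ι R V : Type*} [Infinite ι] [Ring R] [Nontrivial R] [AddCommGroup V] [Module R V]
    (b : Module.Basis ι R V) : UnboundedFiltration (Multiplicative V) where
  level n := {x | (b.repr x.toAdd).support.card ≤ n}
  one_mem n := by simp
  inv_mem hx := by simpa using hx
  mul_mem {m n x y} hx hy := by
    classical
    simp only [Set.mem_ofPred_eq, toAdd_mul, map_add]
    exact (Finset.card_le_card Finsupp.support_add).trans
      ((Finset.card_union_le _ _).trans (add_le_add hx hy))
  conj_mem hx g := by simpa using hx
  exists_mem x := ⟨(b.repr x.toAdd).support.card, by simp⟩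
  exists_notMem n := by
    classical
    obtain ⟨s, hs⟩ := Infinite.exists_subset_card_eq ι (n + 1)
    have hsupp : (Finsupp.indicator s fun _ _ => (1 : R)).support = s := by
      ext i
      simp [Finsupp.indicator_apply]
    exact ⟨.ofAdd (b.repr.symm (Finsupp.indicator s fun _ _ => 1)), by simp [hsupp, hs]⟩

/-- The filtration of an abelian torsion group by its `n!`-torsion subgroups. -/
def ofTorsion {A : Type*} [CommGroup A] (htors : ∀ x : A, IsOfFinOrder x)
    (hexp : ¬ Monoid.ExponentExists A) : UnboundedFiltration A where
  level n := {x | orderOf x ∣ n.factorial}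
  one_mem n := by simp
  inv_mem hx := by simpa using hx
  mul_mem {m n x y} hx hy :=
    (Commute.all x y).orderOf_mul_dvd_lcm.trans <| Nat.lcm_dvd
      (hx.trans (Nat.factorial_dvd_factorial (Nat.le_add_right m n)))
      (hy.trans (Nat.factorial_dvd_factorial (Nat.le_add_left n m)))
  conj_mem hx g := by simpa using hx
  exists_mem x := ⟨orderOf x, Nat.dvd_factorial (htors x).orderOf_pos le_rfl⟩
  exists_notMem n := by
    by_contra! hall
    exact hexp ⟨n.factorial, n.factorial_pos, fun x => orderOf_dvd_iff_pow_eq_one.1 (hall x)⟩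

end UnboundedFiltration

theorem infinite_basis_index {ι R V : Type*} [Semiring R] [Finite R] [AddCommMonoid V]
    [Module R V] [Infinite V] (b : Module.Basis ι R V) : Infinite ι := by
  by_contra hfin
  rw [not_infinite_iff_finite] at hfin
  have : Module.Finite R V := .of_basis b
  have : Finite V := Module.finite_of_finite R
  exact not_finite V

section AbelianGroups

variable {A : Type*} [CommGroup A]

theorem exists_realHom_ne_one_of_not_isOfFinOrder {x : A} (hx : ¬ IsOfFinOrder x) :
    ∃ f : A →* Multiplicative ℝ, f x ≠ 1 := by
  have hinj : Function.Injective (zmultiplesHom (Additive A) (.ofMul x)) :=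
    injective_zsmul_iff_not_isOfFinAddOrder.2 (mt isOfFinAddOrder_ofMul_iff.1 hx)
  obtain ⟨f, hf⟩ := (Module.Baer.of_divisible ℝ).extension_property_addMonoidHom _ hinj
    (zmultiplesHom ℝ 1)
  have hfx : f (.ofMul x) = 1 := by simpa using DFunLike.congr_fun hf 1
  exact ⟨AddMonoidHom.toMultiplicativeRight f, by simp [hfx]⟩

theorem finiteIndex_range_powMonoidHom_of_forall_prime
    (h : ∀ p : ℕ, p.Prime → (powMonoidHom p : A →* A).range.FiniteIndex) {n : ℕ} (hn : n ≠ 0) :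
    (powMonoidHom n : A →* A).range.FiniteIndex := by
  induction n using induction_on_primes with
  | zero => exact absurd rfl hn
  | one =>
    rw [(powMonoidHom 1 : A →* A).range_eq_top_of_surjective fun x => ⟨x, pow_one x⟩]
    infer_instance
  | prime_mul p n hp ih =>
    have hcomp : (powMonoidHom (p * n) : A →* A) = (powMonoidHom p).comp (powMonoidHom n) :=
      MonoidHom.ext fun x => pow_mul' x p n
    have := h p hp
    have := ih (right_ne_zero_of_mul hn)
    rw [Subgroup.finiteIndex_iff, hcomp, MonoidHom.range_comp, Subgroup.index_map]
    exact mul_ne_zero (Subgroup.finiteIndex_of_le le_sup_left).index_ne_zero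
      Subgroup.FiniteIndex.index_ne_zero

theorem exists_prime_infinite_quotient_range_powMonoidHom [Infinite A]
    (hA : Monoid.ExponentExists A) :
    ∃ p : ℕ, p.Prime ∧ Infinite (A ⧸ (powMonoidHom p : A →* A).range) := by
  obtain ⟨n, hn, hpow⟩ := hA
  by_contra! hfin
  have hindex : (powMonoidHom n : A →* A).range.FiniteIndex :=
    finiteIndex_range_powMonoidHom_of_forall_prime
      (fun p hp => Subgroup.finiteIndex_iff_finite_quotient.2 (hfin p hp)) hn.ne'
  have hone : (powMonoidHom n : A →* A) = 1 := MonoidHom.ext hpow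
  rw [hone, MonoidHom.range_one, Subgroup.finiteIndex_iff, Subgroup.index_bot] at hindex
  exact hindex Nat.card_eq_zero_of_infinite

namespace UnboundedFiltration

theorem nonempty_of_forall_pow_prime_eq_one [Infinite A] {p : ℕ} (hp : p.Prime)
    (hA : ∀ x : A, x ^ p = 1) : Nonempty (UnboundedFiltration A) := by
  have : Fact p.Prime := ⟨hp⟩
  let _ : Module (ZMod p) (Additive A) := AddCommGroup.zmodModule hA
  let b := Module.Basis.ofVectorSpace (ZMod p) (Additive A)
  have := infinite_basis_index b
  exact ⟨(ofBasis b).comap _ (MulEquiv.multiplicativeAdditive A).symm.surjective⟩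

theorem nonempty_of_infinite_of_exponentExists [Infinite A] (hA : Monoid.ExponentExists A) :
    Nonempty (UnboundedFiltration A) := by
  obtain ⟨p, hp, hinf⟩ := exists_prime_infinite_quotient_range_powMonoidHom hA
  have hpow (x : A ⧸ (powMonoidHom p : A →* A).range) : x ^ p = 1 := by
    obtain ⟨a, rfl⟩ := QuotientGroup.mk_surjective x
    exact (QuotientGroup.eq_one_iff _).2 ⟨a, rfl⟩
  obtain ⟨F⟩ := nonempty_of_forall_pow_prime_eq_one hp hpow
  exact ⟨F.comap _ (QuotientGroup.mk'_surjective _)⟩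

theorem nonempty_of_infinite [Infinite A] : Nonempty (UnboundedFiltration A) := by
  by_cases htors : ∀ x : A, IsOfFinOrder x
  · by_cases hexp : Monoid.ExponentExists A
    · exact nonempty_of_infinite_of_exponentExists hexp
    · exact ⟨ofTorsion htors hexp⟩
  · push Not at htors
    obtain ⟨x, hx⟩ := htors
    obtain ⟨f, hf⟩ := exists_realHom_ne_one_of_not_isOfFinOrder hx
    exact ⟨ofRealHom f fun h => hf (by simp [h])⟩

end UnboundedFiltration

end AbelianGroups

section SetPowers

theorem finite_pow {M : Type*} [Monoid M] {S : Set M} (hS : S.Finite) (n : ℕ) :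
    (S ^ n).Finite := by
  induction n with
  | zero => simp
  | succ n ih => exact pow_succ S n ▸ ih.mul hS

variable {G : Type*} [Group G] {S : Set G}

theorem exists_mem_pow_of_mem_closure (hS : S⁻¹ = S) {x : G} (hx : x ∈ Subgroup.closure S) :
    ∃ n : ℕ, x ∈ S ^ n := by
  induction hx using Subgroup.closure_induction with
  | mem x hx => exact ⟨1, by simpa using hx⟩
  | one => exact ⟨0, by simp⟩
  | mul x y _ _ hx hy =>
    obtain ⟨m, hm⟩ := hx
    obtain ⟨n, hn⟩ := hy
    exact ⟨m + n, pow_add S m n ▸ Set.mul_mem_mul hm hn⟩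
  | inv x _ hx =>
    obtain ⟨n, hn⟩ := hx
    exact ⟨n, by rwa [← hS, inv_pow, Set.inv_mem_inv]⟩

theorem conj_mem_pow (hS : ∀ x ∈ S, ∀ g, g * x * g⁻¹ ∈ S) {n : ℕ} {x : G} (hx : x ∈ S ^ n)
    (g : G) : g * x * g⁻¹ ∈ S ^ n := by
  have himage : MulAut.conj g '' S ⊆ S := by
    rintro _ ⟨y, hy, rfl⟩
    exact hS y hy g
  have hconj : MulAut.conj g x ∈ (MulAut.conj g '' S) ^ n :=
    Set.image_pow (MulAut.conj g) S n ▸ Set.mem_image_of_mem _ hx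
  exact Set.pow_subset_pow_left himage hconj

theorem commute_of_forall_conj_mem (hS : ∀ x ∈ S, ∀ g, g * x * g⁻¹ ∈ S) (T : Set G) :
    Commute T S := by
  ext x
  constructor
  · rintro ⟨t, ht, s, hs, rfl⟩
    exact ⟨t * s * t⁻¹, hS s hs t, t, ht, by simp⟩
  · rintro ⟨s, hs, t, ht, rfl⟩
    exact ⟨t, ht, t⁻¹ * s * t, by simpa using hS s hs t⁻¹, by simp [mul_assoc]⟩

variable (S) in
theorem inv_conjugatesOfSet :
    (Group.conjugatesOfSet S)⁻¹ = Group.conjugatesOfSet S⁻¹ := by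
  ext x
  simp only [Set.mem_inv, Group.mem_conjugatesOfSet_iff, isConj_iff]
  constructor
  · rintro ⟨a, ha, g, hg⟩
    exact ⟨a⁻¹, by simpa using ha, g, by rw [← conj_inv, hg, inv_inv]⟩
  · rintro ⟨a, ha, g, rfl⟩
    exact ⟨a⁻¹, ha, g, conj_inv.symm⟩

/-- The filtration by word length in the conjugates of a normally generating set. -/
def UnboundedFiltration.ofNormalClosure (hone : 1 ∈ S) (hinv : S⁻¹ = S)
    (hgen : Subgroup.normalClosure S = ⊤) (hne : ∀ n, ∃ x, x ∉ Group.conjugatesOfSet S ^ n) :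
    UnboundedFiltration G where
  level n := Group.conjugatesOfSet S ^ n
  one_mem n := Set.one_mem_pow (Group.subset_conjugatesOfSet hone)
  inv_mem {n x} hx := by
    rwa [← Set.mem_inv, ← inv_pow, inv_conjugatesOfSet, hinv]
  mul_mem hx hy := pow_add (Group.conjugatesOfSet S) _ _ ▸ Set.mul_mem_mul hx hy
  conj_mem hx g := conj_mem_pow (fun _ hs _ => Group.conj_mem_conjugatesOfSet hs) hx g
  exists_mem x := exists_mem_pow_of_mem_closure (by rw [inv_conjugatesOfSet, hinv])
    (hgen ▸ Subgroup.mem_top x : x ∈ Subgroup.normalClosure S)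
  exists_notMem := hne

end SetPowers

section Commutators

variable {G : Type*} [Group G]

theorem inv_commutatorSet : (commutatorSet G)⁻¹ = commutatorSet G := by
  have inv_subset : (commutatorSet G)⁻¹ ⊆ commutatorSet G := by
    rintro x ⟨a, b, hab⟩
    exact ⟨b, a, by rw [← commutatorElement_inv, hab, inv_inv]⟩
  exact inv_subset.antisymm (Set.inv_subset.1 inv_subset)

theorem conj_mem_commutatorSet {x : G} (hx : x ∈ commutatorSet G) (g : G) :
    g * x * g⁻¹ ∈ commutatorSet G := by
  obtain ⟨a, b, rfl⟩ := hx
  exact ⟨_, _, (map_commutatorElement (MulAut.conj g) a b).symm⟩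

theorem isProdOfNCommutators_iff_mem_commutatorSet_pow {x : G} {n : ℕ} :
    IsProdOfNCommutators x n ↔ x ∈ commutatorSet G ^ n := by
  rw [Set.mem_pow]
  constructor
  · rintro ⟨f, g, rfl⟩
    exact ⟨fun i => ⟨⁅f i, g i⁆, commutator_mem_commutatorSet (f i) (g i)⟩, rfl⟩
  · rintro ⟨c, rfl⟩
    choose f g hfg using fun i => (c i).2
    exact ⟨f, g, by simp only [hfg]⟩

theorem exists_mem_commutatorSet_pow {x : G} (hx : x ∈ commutator G) :
    ∃ n : ℕ, x ∈ commutatorSet G ^ n :=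
  exists_mem_pow_of_mem_closure inv_commutatorSet (commutator_eq_closure G ▸ hx)

theorem commutatorSet_pow_mono : Monotone (commutatorSet G ^ · : ℕ → Set G) :=
  fun _ _ => Set.pow_subset_pow_right (one_mem_commutatorSet G)

theorem exists_subset_commutatorSet_pow {T : Set G} (hT : T.Finite) (hTG : T ⊆ commutator G) :
    ∃ k : ℕ, T ⊆ commutatorSet G ^ k := by
  have hcover : ↑hT.toFinset ⊆ ⋃ k : ℕ, commutatorSet G ^ k := fun x hx =>
    Set.mem_iUnion.2 (exists_mem_commutatorSet_pow (hTG (hT.mem_toFinset.1 hx)))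
  simpa using
    commutatorSet_pow_mono.directed_le.exists_mem_subset_of_finset_subset_biUnion hcover

theorem commutatorSet_pow_subset_commutator (n : ℕ) :
    commutatorSet G ^ n ⊆ (commutator G : Set G) :=
  Submonoid.pow_subset (S := (commutator G).toSubmonoid)
    (commutator_eq_closure G ▸ Subgroup.subset_closure)

theorem exists_mul_commutatorSet_pow_inter_subset {T : Set G} (hT : T.Finite) (n : ℕ) :
    ∃ k : ℕ, T * commutatorSet G ^ n ∩ commutator G ⊆ commutatorSet G ^ k := by
  obtain ⟨k, hk⟩ := exists_subset_commutatorSet_pow (hT.inter_of_left (commutator G : Set G))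
    Set.inter_subset_right
  refine ⟨k + n, ?_⟩
  rintro _ ⟨⟨t, ht, c, hc, rfl⟩, htc⟩
  have ht_comm : t ∈ commutator G :=
    (Subgroup.mul_mem_cancel_right _ (commutatorSet_pow_subset_commutator n hc)).1 htc
  rw [pow_add]
  exact Set.mul_mem_mul (hk ⟨ht, ht_comm⟩) hc

theorem conjugatesOfSet_union_commutatorSet_subset {T : Set G} (hT : 1 ∈ T) :
    Group.conjugatesOfSet (T ∪ commutatorSet G) ⊆ T * commutatorSet G := by
  intro x hx
  obtain ⟨a, ha, hax⟩ := Group.mem_conjugatesOfSet_iff.1 hx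
  obtain ⟨g, rfl⟩ := isConj_iff.1 hax
  rcases ha with ha | ha
  · exact ⟨a, ha, ⁅a⁻¹, g⁆, commutator_mem_commutatorSet _ _,
      by simp [commutatorElement_def, mul_assoc]⟩
  · exact ⟨1, hT, g * a * g⁻¹, conj_mem_commutatorSet ha g, one_mul _⟩

theorem exists_notMem_conjugatesOfSet_union_commutatorSet_pow {T : Set G} (hT : T.Finite)
    (hT1 : 1 ∈ T) (h : ∀ N : ℕ, ∃ x ∈ commutator G, x ∉ commutatorSet G ^ N) (n : ℕ) :
    ∃ x, x ∉ Group.conjugatesOfSet (T ∪ commutatorSet G) ^ n := by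
  obtain ⟨k, hk⟩ := exists_mul_commutatorSet_pow_inter_subset (finite_pow hT n) n
  obtain ⟨x, hx, hxk⟩ := h k
  refine ⟨x, fun hxn => hxk (hk ⟨?_, hx⟩)⟩
  have hcomm : Commute T (commutatorSet G) :=
    commute_of_forall_conj_mem (fun _ => conj_mem_commutatorSet) T
  rw [← hcomm.mul_pow]
  exact Set.pow_subset_pow_left (conjugatesOfSet_union_commutatorSet_subset hT1) hxn

theorem normalClosure_union_commutatorSet_eq_top {T : Set G}
    (hT : ∀ g : G, ∃ t ∈ T, Abelianization.of t = Abelianization.of g) :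
    Subgroup.normalClosure (T ∪ commutatorSet G) = ⊤ := by
  refine (Subgroup.eq_top_iff' _).2 fun g => ?_
  obtain ⟨t, ht, htg⟩ := hT g
  have htg_comm : t⁻¹ * g ∈ commutator G := QuotientGroup.eq.1 htg
  have hcomm_le : commutator G ≤ Subgroup.normalClosure (T ∪ commutatorSet G) := by
    rw [commutator_eq_normalClosure]
    exact Subgroup.normalClosure_mono Set.subset_union_right
  have ht_mem := Subgroup.subset_normalClosure (Set.mem_union_left (commutatorSet G) ht)
  simpa using mul_mem ht_mem (hcomm_le htg_comm)

theorem exists_finite_symmetric_forall_exists_map_eq {H : Type*} [Group H] (f : G →* H)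
    [Finite f.range] :
    ∃ T : Set G, T.Finite ∧ 1 ∈ T ∧ T⁻¹ = T ∧ ∀ g, ∃ t ∈ T, f t = f g := by
  choose s hs using fun y : f.range => y.2
  have hfin := Set.finite_range s
  refine ⟨{1} ∪ (Set.range s ∪ (Set.range s)⁻¹),
    (Set.finite_singleton 1).union (hfin.union hfin.inv), by simp, ?_, fun g => ?_⟩
  · rw [Set.union_inv, Set.union_inv, inv_inv, Set.inv_singleton, inv_one,
      Set.union_comm (Set.range s)]
  · exact ⟨s ⟨f g, g, rfl⟩, by simp, hs _⟩

theorem UnboundedFiltration.nonempty_of_finite_abelianization [Finite (Abelianization G)]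
    (h : ∀ N : ℕ, ∃ x ∈ commutator G, x ∉ commutatorSet G ^ N) :
    Nonempty (UnboundedFiltration G) := by
  obtain ⟨T, hT, hT1, hTinv, hTsurj⟩ :=
    exists_finite_symmetric_forall_exists_map_eq (Abelianization.of (G := G))
  exact ⟨ofNormalClosure (.inl hT1) (by rw [Set.union_inv, hTinv, inv_commutatorSet])
    (normalClosure_union_commutatorSet_eq_top hTsurj)
    (exists_notMem_conjugatesOfSet_union_commutatorSet_pow hT hT1 h)⟩

end Commutators

/-- If the commutator length is unbounded on the commutator subgroup `[G,G]`,
then `G` admits an unbounded conjugation-invariant norm. -/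
theorem unbounded_of_unbounded_commutator_length {G : Type*} [Group G]
    (h : ∀ N : ℕ, ∃ x : G, x ∈ commutator G ∧ ¬ IsProdOfNCommutators x N) :
    ∃ ν : G → ℝ, IsConjInvNorm ν ∧ ∀ C : ℝ, ∃ g : G, C < ν g := by
  suffices Nonempty (UnboundedFiltration G) from
    this.elim fun F => ⟨F.norm, F.isConjInvNorm_norm, F.exists_lt_norm⟩
  rcases finite_or_infinite (Abelianization G) with hfin | hinf
  · simp only [isProdOfNCommutators_iff_mem_commutatorSet_pow] at h
    exact UnboundedFiltration.nonempty_of_finite_abelianization h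
  · obtain ⟨F⟩ := UnboundedFiltration.nonempty_of_infinite (A := Abelianization G)
    exact ⟨F.comap Abelianization.of QuotientGroup.mk_surjective⟩
end

section
/- If a group G admits a quasi-norm, then G admits an unbounded conjugation-invariant norm. (The norm is obtained from the quasi-norm by symmetrization q(a) ↦ max(q(a), q(a⁻¹)), then replacing q(a) by the supremum of q over the conjugacy class of a, and then adding a sufficiently large constant to the value at every element other than the identity.) -/
/-- A quasi-norm on a group `G`: a nonnegative, quasi-subadditive,
quasi-conjugation-invariant, unbounded function. -/
def IsQuasiNorm {G : Type*} [Group G] (q : G → ℝ) : Prop :=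
  (∀ a : G, 0 ≤ q a) ∧
    (∃ c : ℝ, (∀ a b : G, q (a * b) ≤ q a + q b + c) ∧
      (∀ a b : G, |q (b⁻¹ * a * b) - q a| ≤ c)) ∧
    (∀ C : ℝ, ∃ a : G, C < q a)

/-!
Taking the supremum of `q` over conjugacy classes makes it conjugation-invariant, and then taking
the maximum of the values at `a` and `a⁻¹` makes it symmetric; neither step changes the defect `c`
of subadditivity or decreases `q`. A symmetric function with defect `c` is bounded below by `-c`,
because `p 1 ≤ 2 * p 1 + c` and `p 1 ≤ 2 * p a + c`. Adding a constant larger than `c` away from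
the identity therefore makes it positive there, and absorbs the defect.
-/

/-- Quasi-subadditivity with defect `c`, the analogue for functions on a multiplicative structure
of subadditivity up to a constant. The defect is a parameter so that it can be tracked through
constructions. -/
def QuasiSubadditiveWith {M R : Type*} [Mul M] [Add R] [LE R] (c : R) (q : M → R) : Prop :=
  ∀ a b, q (a * b) ≤ q a + q b + c

/-- The supremum of `q` over the conjugacy class of `a`, the conjugation-invariant function
associated with `q`. It is meaningful only when `q` is bounded above on that class. -/
noncomputable def conjSup {M R : Type*} [Monoid M] [SupSet R] (q : M → R) (a : M) : R :=
  sSup (q '' conjugatesOf a)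

/-- The symmetrization of `q` under inversion. -/
def symmetrization {G R : Type*} [Inv G] [Max R] (q : G → R) (a : G) : R :=
  max (q a) (q a⁻¹)

/-- The function `p + K` reset to `0` at the identity, which turns a symmetric quasi-subadditive
function into a norm when `K` is large. -/
noncomputable def addAwayFromOne {G R : Type*} [One G] [AddZeroClass R] (K : R) (p : G → R) :
    G → R :=
  ({1}ᶜ : Set G).indicator fun a => p a + K

section ConjSup

variable {M R : Type*} [Monoid M]

theorem conjSup_eq_of_isConj [SupSet R] (q : M → R) {a b : M} (hab : IsConj a b) :
    conjSup q a = conjSup q b := by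
  rw [conjSup, conjSup, hab.conjugatesOf_eq]

variable [ConditionallyCompleteLattice R]

theorem le_conjSup_of_isConj {q : M → R} {a b : M}
    (hq : BddAbove (q '' conjugatesOf a)) (hab : IsConj a b) : q b ≤ conjSup q a :=
  le_csSup hq (Set.mem_image_of_mem q hab)

theorem conjSup_le {q : M → R} {a : M} {x : R} (h : ∀ b, IsConj a b → q b ≤ x) :
    conjSup q a ≤ x :=
  csSup_le ((Set.nonempty_of_mem mem_conjugatesOf_self).image q) (Set.forall_mem_image.2 h)

theorem quasiSubadditiveWith_conjSup {G : Type*} [Group G] [AddCommMonoid R]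
    [IsOrderedAddMonoid R] {q : G → R} {c : R} (hq : QuasiSubadditiveWith c q)
    (hbdd : ∀ a, BddAbove (q '' conjugatesOf a)) : QuasiSubadditiveWith c (conjSup q) := by
  refine fun a b => conjSup_le fun x hx => ?_
  obtain ⟨g, rfl⟩ := isConj_iff.1 hx
  calc q (g * (a * b) * g⁻¹) = q (g * a * g⁻¹ * (g * b * g⁻¹)) := by rw [conj_mul]
    _ ≤ q (g * a * g⁻¹) + q (g * b * g⁻¹) + c := hq _ _
    _ ≤ conjSup q a + conjSup q b + c := by
      gcongr
      · exact le_conjSup_of_isConj (hbdd a) (isConj_iff.2 ⟨g, rfl⟩)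
      · exact le_conjSup_of_isConj (hbdd b) (isConj_iff.2 ⟨g, rfl⟩)

end ConjSup

section Symmetrization

variable {G R : Type*} [LinearOrder R]

theorem le_symmetrization [Inv G] (q : G → R) (a : G) : q a ≤ symmetrization q a :=
  le_max_left _ _

theorem symmetrization_inv [InvolutiveInv G] (q : G → R) (a : G) :
    symmetrization q a⁻¹ = symmetrization q a := by
  rw [symmetrization, symmetrization, inv_inv, max_comm]

theorem symmetrization_conj [Group G] {q : G → R} (hq : ∀ a g, q (g * a * g⁻¹) = q a) (a g : G) :
    symmetrization q (g * a * g⁻¹) = symmetrization q a := by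
  rw [symmetrization, symmetrization, conj_inv, hq, hq]

theorem quasiSubadditiveWith_symmetrization [DivisionMonoid G] [AddCommMonoid R]
    [IsOrderedAddMonoid R] {q : G → R} {c : R} (hq : QuasiSubadditiveWith c q) :
    QuasiSubadditiveWith c (symmetrization q) := by
  refine fun a b => max_le ?_ ?_
  · calc q (a * b) ≤ q a + q b + c := hq a b
      _ ≤ symmetrization q a + symmetrization q b + c := by gcongr <;> exact le_max_left _ _
  · calc q (a * b)⁻¹ = q (b⁻¹ * a⁻¹) := by rw [mul_inv_rev]
      _ ≤ q b⁻¹ + q a⁻¹ + c := hq _ _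
      _ = q a⁻¹ + q b⁻¹ + c := by rw [add_comm (q b⁻¹)]
      _ ≤ symmetrization q a + symmetrization q b + c := by gcongr <;> exact le_max_right _ _

end Symmetrization

section AddAwayFromOne

variable {G R : Type*}

theorem addAwayFromOne_one [One G] [AddZeroClass R] (K : R) (p : G → R) :
    addAwayFromOne K p 1 = 0 :=
  Set.indicator_of_notMem (by simp) _

theorem addAwayFromOne_of_ne_one [One G] [AddZeroClass R] (K : R) (p : G → R) {a : G}
    (ha : a ≠ 1) : addAwayFromOne K p a = p a + K :=
  Set.indicator_of_mem ha _

theorem addAwayFromOne_eq_of_eq [One G] [AddZeroClass R] (K : R) {p : G → R} {a b : G}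
    (hone : a = 1 ↔ b = 1) (hp : p a = p b) : addAwayFromOne K p a = addAwayFromOne K p b := by
  by_cases ha : a = 1
  · rw [ha, hone.1 ha]
  · rw [addAwayFromOne_of_ne_one K p ha, addAwayFromOne_of_ne_one K p (mt hone.2 ha), hp]

variable [AddCommGroup R] [LinearOrder R] [IsOrderedAddMonoid R] {p : G → R} {c K : R}

theorem exists_lt_addAwayFromOne [One G] (K : R) (hp : ∀ C, ∃ a, C < p a) (C : R) :
    ∃ a, C < addAwayFromOne K p a := by
  obtain ⟨a, ha⟩ := hp (max (C - K) (p 1))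
  obtain ⟨hCa, h1a⟩ := max_lt_iff.1 ha
  have ha1 : a ≠ 1 := fun h => h1a.ne' (congrArg p h)
  exact ⟨a, by rw [addAwayFromOne_of_ne_one K p ha1]; exact sub_lt_iff_lt_add.1 hCa⟩

theorem QuasiSubadditiveWith.neg_le_of_symmetric [Group G] (hp : QuasiSubadditiveWith c p)
    (hinv : ∀ a, p a⁻¹ = p a) (a : G) : -c ≤ p a := by
  have h_one : p 1 ≤ p 1 + p 1 + c := by simpa only [mul_one] using hp 1 1
  have h_le : p 1 ≤ p a + p a + c := by simpa only [mul_inv_cancel, hinv] using hp a a⁻¹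
  grind

theorem addAwayFromOne_pos [One G] {a : G} (hpa : -c ≤ p a) (hcK : c < K) (ha : a ≠ 1) :
    0 < addAwayFromOne K p a := by
  rw [addAwayFromOne_of_ne_one K p ha]
  exact neg_lt_iff_pos_add.1 ((neg_lt_neg hcK).trans_le hpa)

theorem addAwayFromOne_nonneg [One G] {a : G} (hpa : -c ≤ p a) (hcK : c < K) :
    0 ≤ addAwayFromOne K p a := by
  rcases eq_or_ne a 1 with rfl | ha
  · exact (addAwayFromOne_one K p).ge
  · exact (addAwayFromOne_pos hpa hcK ha).le

theorem addAwayFromOne_mul_le [MulOneClass G] (hp : QuasiSubadditiveWith c p)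
    (hnonneg : ∀ a, 0 ≤ addAwayFromOne K p a) (hcK : c ≤ K) (a b : G) :
    addAwayFromOne K p (a * b) ≤ addAwayFromOne K p a + addAwayFromOne K p b := by
  rcases eq_or_ne a 1 with rfl | ha
  · rw [one_mul, addAwayFromOne_one, zero_add]
  rcases eq_or_ne b 1 with rfl | hb
  · rw [mul_one, addAwayFromOne_one, add_zero]
  rcases eq_or_ne (a * b) 1 with hab | hab
  · rw [hab, addAwayFromOne_one]
    exact add_nonneg (hnonneg a) (hnonneg b)
  · simp only [addAwayFromOne_of_ne_one K p, ha, hb, hab, ne_eq, not_false_eq_true]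
    calc p (a * b) + K ≤ p a + p b + c + K := by gcongr; exact hp a b
      _ ≤ p a + p b + K + K := by gcongr
      _ = p a + K + (p b + K) := by abel

theorem isConjInvNorm_addAwayFromOne [Group G] {p : G → ℝ} {c K : ℝ}
    (hp : QuasiSubadditiveWith c p) (hinv : ∀ a, p a⁻¹ = p a)
    (hconj : ∀ a g, p (g * a * g⁻¹) = p a) (hcK : c < K) :
    IsConjInvNorm (addAwayFromOne K p) := by
  have hlower : ∀ a, -c ≤ p a := hp.neg_le_of_symmetric hinv
  have hnonneg : ∀ a, 0 ≤ addAwayFromOne K p a := fun a => addAwayFromOne_nonneg (hlower a) hcK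
  exact ⟨addAwayFromOne_one K p, hnonneg,
    fun a => addAwayFromOne_eq_of_eq K inv_eq_one (hinv a),
    addAwayFromOne_mul_le hp hnonneg hcK.le,
    fun a g => addAwayFromOne_eq_of_eq K conj_eq_one_iff (hconj a g),
    fun a ha => addAwayFromOne_pos (hlower a) hcK ha⟩

end AddAwayFromOne

theorem IsQuasiNorm.bddAbove_image_conjugatesOf {G : Type*} [Group G] {q : G → ℝ}
    (hq : IsQuasiNorm q) (a : G) : BddAbove (q '' conjugatesOf a) := by
  obtain ⟨-, ⟨c, -, hconj⟩, -⟩ := hq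
  refine ⟨q a + c, Set.forall_mem_image.2 fun x hx => ?_⟩
  obtain ⟨g, rfl⟩ := isConj_iff.1 hx
  have h : |q (g * a * g⁻¹) - q a| ≤ c := by simpa only [inv_inv] using hconj a g⁻¹
  exact sub_le_iff_le_add'.1 (le_of_abs_le h)

theorem unbounded_norm_of_quasiNorm_general {G : Type*} [Group G] (q : G → ℝ) {c : ℝ}
    (hmul : QuasiSubadditiveWith c q) (hbdd : ∀ a, BddAbove (q '' conjugatesOf a))
    (hunbdd : ∀ C : ℝ, ∃ a : G, C < q a) :
    ∃ ν : G → ℝ, IsConjInvNorm ν ∧ ∀ C : ℝ, ∃ g : G, C < ν g := by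
  let p := symmetrization (conjSup q)
  have hp : QuasiSubadditiveWith c p :=
    quasiSubadditiveWith_symmetrization (quasiSubadditiveWith_conjSup hmul hbdd)
  have hconj : ∀ a g, p (g * a * g⁻¹) = p a :=
    symmetrization_conj fun a g => (conjSup_eq_of_isConj q (isConj_iff.2 ⟨g, rfl⟩)).symm
  have hle : ∀ a, q a ≤ p a := fun a =>
    (le_conjSup_of_isConj (hbdd a) (IsConj.refl a)).trans (le_symmetrization _ a)
  have hp_unbdd : ∀ C, ∃ a, C < p a := fun C =>
    (hunbdd C).imp fun a ha => ha.trans_le (hle a)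
  exact ⟨addAwayFromOne (c + 1) p,
    isConjInvNorm_addAwayFromOne hp (symmetrization_inv _) hconj (lt_add_one c),
    exists_lt_addAwayFromOne (c + 1) hp_unbdd⟩

/-- If a group admits a quasi-norm then it admits an unbounded
conjugation-invariant norm. -/
theorem unbounded_norm_of_quasiNorm {G : Type*} [Group G]
    (q : G → ℝ) (hq : IsQuasiNorm q) :
    ∃ ν : G → ℝ, IsConjInvNorm ν ∧ ∀ C : ℝ, ∃ g : G, C < ν g := by
  have ⟨_, ⟨_, hmul, _⟩, hunbdd⟩ := hq
  exact unbounded_norm_of_quasiNorm_general q hmul hq.bddAbove_image_conjugatesOf hunbdd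
end

section
/- Let G be a group whose abelianization G/[G,G] is finite, and let Ḡ = (G × G) ⋊ ℤ/2 be the extension of G × G by an element t with t² = 1 and t(g₁,g₂)t⁻¹ = (g₂,g₁). If Ḡ admits a stably unbounded conjugation-invariant norm, then Ḡ admits a non-trivial homogeneous quasi-morphism. -/
/-- The swap automorphism of `G × G`. -/
def swapAut (G : Type*) [Group G] : MulAut (G × G) := MulEquiv.prodComm

/-- The action of `ℤ/2` on `G × G` by swapping the two coordinates. -/
def swapHom (G : Type*) [Group G] : Multiplicative (ZMod 2) →* MulAut (G × G) where
  toFun t := if t = 1 then 1 else swapAut G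
  map_one' := if_pos rfl
  map_mul' a b := by
    have h2 : ∀ x : Multiplicative (ZMod 2), x = 1 ∨ x = Multiplicative.ofAdd 1 := by decide
    have hne : (Multiplicative.ofAdd (1 : ZMod 2)) ≠ 1 := by decide
    have hmul : (Multiplicative.ofAdd (1 : ZMod 2)) * Multiplicative.ofAdd 1 = 1 := by decide
    have hswap : swapAut G * swapAut G = 1 := by
      ext x <;> rfl
    rcases h2 a with ha | ha <;> rcases h2 b with hb | hb <;>
      subst ha <;> subst hb <;> simp [hne, hmul, hswap]

/-- The extension of `G × G` by an element `t` of order 2 which swaps coordinates: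
the semidirect product `(G × G) ⋊ ℤ/2`. -/
abbrev GBar (G : Type*) [Group G] :=
  SemidirectProduct (G × G) (Multiplicative (ZMod 2)) (swapHom G)

/-!
Every conjugation-invariant seminorm `ν` on `Ḡ` is bounded on commutators: up to factors of bounded
norm each element lies in `G × 1`, and `t` conjugates `G × 1` to the factor `1 × G`, which commutes
with it, so that `⁅x, y⁆ = ⁅⁅x, t⁆, y⁆` has norm at most `4 ν(t)` for `x` and `y` in `G × 1`.

If `ν` is bounded on the commutators of a group `Γ`, then the paths `ℝ → Γ` modulo bounded paths
form a commutative group, in which a real chain `v` on `Γ` determines the class of the path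
`t ↦ ∏ g, g ^ ⌊t * v g⌋`. The least linear growth rate of the paths in this class is a sublinear
functional of `v` which at `f` is at least `ν_∞(f)`, so by Hahn–Banach it dominates a linear `Φ`
with `Φ f ≥ ν_∞(f)`. As `ν(aⁿ bⁿ (ab)⁻ⁿ)` is at most linear in `n` with a constant independent of
`a` and `b`, the restriction of `Φ` to `Γ` is a homogeneous quasi-morphism. On `Ḡ` it is not a
homomorphism when the abelianization of `G` is torsion, since then all homomorphisms to `ℝ` vanish.
-/


open Filter Topology
open scoped commutatorElement

/-- A homogeneous quasi-morphism: a real function with bounded additivity defect which is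
homogeneous along cyclic subgroups. -/
structure IsHomogeneousQuasimorphism {Γ : Type*} [Group Γ] (r : Γ → ℝ) : Prop where
  exists_defect_le : ∃ C : ℝ, ∀ a b, |r (a * b) - r a - r b| ≤ C
  map_zpow : ∀ (a : Γ) (n : ℤ), r (a ^ n) = n * r a

/-- A conjugation-invariant norm seen as one of Mathlib's group seminorms. -/
def IsConjInvNorm.toGroupSeminorm {G : Type*} [Group G] {ν : G → ℝ} (hν : IsConjInvNorm ν) :
    GroupSeminorm G where
  toFun := ν
  map_one' := hν.1
  mul_le' := hν.2.2.2.1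
  inv' := hν.2.2.1

theorem exists_linearMap_eq_and_le_of_sublinear {E : Type*} [AddCommGroup E] [Module ℝ E]
    {N : E → ℝ} (N_smul : ∀ c : ℝ, 0 < c → ∀ x, N (c • x) = c * N x)
    (N_add : ∀ x y, N (x + y) ≤ N x + N y) (x : E) :
    ∃ Φ : E →ₗ[ℝ] ℝ, Φ x = N x ∧ ∀ y, Φ y ≤ N y := by
  have N_zero : N 0 = 0 := by
    have := N_smul 2 two_pos 0
    rw [smul_zero] at this
    linarith
  have smul_le (c : ℝ) : c * N x ≤ N (c • x) := by
    rcases lt_trichotomy c 0 with hc | rfl | hc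
    · have h := N_add (c • x) (-c • x)
      rw [← add_smul, add_neg_cancel, zero_smul, N_zero, N_smul (-c) (neg_pos.2 hc)] at h
      linarith
    · simp [N_zero]
    · exact (N_smul c hc x).ge
  have smul_eq_zero_of (c : ℝ) (hc : c • x = 0) : (RingHom.id ℝ) c • N x = 0 := by
    rcases smul_eq_zero.1 hc with rfl | rfl <;> simp [N_zero]
  obtain ⟨Φ, hΦ, hΦN⟩ := exists_extension_of_le_sublinear
    (LinearPMap.mkSpanSingleton' x (N x) smul_eq_zero_of) N N_smul N_add (by
      rintro ⟨y, hy⟩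
      obtain ⟨c, rfl⟩ := Submodule.mem_span_singleton.1 hy
      rw [LinearPMap.mkSpanSingleton'_apply]
      exact smul_le c)
  refine ⟨Φ, ?_, hΦN⟩
  rw [← LinearPMap.mkSpanSingleton'_apply_self x (N x) smul_eq_zero_of
    (Submodule.mem_span_singleton_self x)]
  exact hΦ ⟨x, _⟩

section GroupSeminorm

variable {Γ : Type*} [Group Γ] (ν : GroupSeminorm Γ)

theorem map_zpow_le_abs_mul (g : Γ) (k : ℤ) : ν (g ^ k) ≤ |(k : ℝ)| * ν g := by
  have map_pow_le (n : ℕ) : ν (g ^ n) ≤ n * ν g :=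
    letI := ν.toSeminormedGroup
    norm_pow_le_mul_norm (a := g)
  obtain ⟨n, rfl | rfl⟩ := k.eq_nat_or_neg <;> simpa using map_pow_le n

variable {ν} {K : ℝ}

theorem map_conj_le_of_commutatorElement_le (hK : ∀ a b : Γ, ν ⁅a, b⁆ ≤ K) (g x : Γ) :
    ν (g * x * g⁻¹) ≤ K + ν x := by
  have h := map_mul_le_add ν ⁅g, x⁆ x
  rw [← conj_eq_commutatorElement_mul, MulAut.conj_apply] at h
  linarith [hK g x]

theorem map_pow_mul_pow_div_mul_pow_le (hK : ∀ a b : Γ, ν ⁅a, b⁆ ≤ K) (a b : Γ) (n : ℕ) :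
    ν (a ^ n * b ^ n / (a * b) ^ n) ≤ 2 * K * n := by
  induction n with
  | zero => simp
  | succ n ih =>
    have peel : a ^ (n + 1) * b ^ (n + 1) / (a * b) ^ (n + 1) =
        (a ^ n * ⁅a, b ^ n⁆ * (a ^ n)⁻¹) * (a ^ n * b ^ n / (a * b) ^ n) := by
      rw [commutatorElement_def, div_eq_mul_inv, div_eq_mul_inv, pow_succ (a * b)]
      group
    rw [peel]
    have := map_mul_le_add ν (a ^ n * ⁅a, b ^ n⁆ * (a ^ n)⁻¹) (a ^ n * b ^ n / (a * b) ^ n)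
    have := map_conj_le_of_commutatorElement_le hK (a ^ n) ⁅a, b ^ n⁆
    push_cast
    linarith [hK a (b ^ n)]

end GroupSeminorm

section Realization

variable {Γ : Type*} [Group Γ] (ν : GroupSeminorm Γ)

/-- The paths `ℝ → Γ` along which `ν` is bounded. -/
def boundedPaths : Subgroup (ℝ → Γ) where
  carrier := {s | ∃ D, ∀ t, ν (s t) ≤ D}
  one_mem' := ⟨0, fun _ => (map_one_eq_zero ν).le⟩
  mul_mem' := fun ⟨D, hD⟩ ⟨E, hE⟩ =>
    ⟨D + E, fun t => (map_mul_le_add ν _ _).trans (add_le_add (hD t) (hE t))⟩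
  inv_mem' := fun ⟨D, hD⟩ => ⟨D, fun t => (map_inv_eq_map ν _).trans_le (hD t)⟩

/-- The group of paths `ℝ → Γ` modulo bounded paths and commutators. Abelianizing first makes it a
commutative group for every `ν`; when `ν` is bounded on commutators this divides out no more than
the bounded paths. -/
abbrev AsymptoticAbelianization :=
  Abelianization (ℝ → Γ) ⧸ (boundedPaths ν).map Abelianization.of

/-- The class of a path modulo bounded paths and commutators. -/
def asymptoticClass : (ℝ → Γ) →* AsymptoticAbelianization ν :=
  (QuotientGroup.mk' _).comp Abelianization.of

variable {ν} {K : ℝ}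

theorem asymptoticClass_eq_of_div_mem {s s' : ℝ → Γ} (h : s / s' ∈ boundedPaths ν) :
    asymptoticClass ν s = asymptoticClass ν s' := by
  rw [← div_eq_one, ← map_div]
  exact (QuotientGroup.eq_one_iff _).2 (Subgroup.mem_map_of_mem _ h)

theorem ker_asymptoticClass (hK : ∀ a b : Γ, ν ⁅a, b⁆ ≤ K) :
    (asymptoticClass ν).ker = boundedPaths ν := by
  have commutator_le : commutator (ℝ → Γ) ≤ boundedPaths ν := by
    rw [commutator_def, Subgroup.commutator_le]
    exact fun a _ b _ => ⟨K, fun t => hK (a t) (b t)⟩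
  rw [asymptoticClass, ← MonoidHom.comap_ker, QuotientGroup.ker_mk', Subgroup.comap_map_eq,
    Abelianization.ker_of, sup_eq_left]
  exact commutator_le

theorem zpow_floor_add_div_mem_boundedPaths (g : Γ) (c d : ℝ) :
    (fun t : ℝ => g ^ ⌊t * (c + d)⌋) / ((fun t => g ^ ⌊t * c⌋) * fun t => g ^ ⌊t * d⌋) ∈
      boundedPaths ν := by
  refine ⟨ν g, fun t => ?_⟩
  have h_lower := Int.le_floor_add (t * c) (t * d)
  have h_upper := Int.le_floor_add_floor (t * c) (t * d)
  rw [Pi.div_apply, Pi.mul_apply, mul_add, ← zpow_add, div_eq_mul_inv, ← zpow_sub]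
  obtain h | h : ⌊t * c + t * d⌋ - (⌊t * c⌋ + ⌊t * d⌋) = 0 ∨
      ⌊t * c + t * d⌋ - (⌊t * c⌋ + ⌊t * d⌋) = 1 := by lia
  · simp [h]
  · simp [h]

variable (ν)

/-- The class of `t ↦ ∏ g, g ^ ⌊t * v g⌋` for a real chain `v`: the order of the factors and the
rounding only matter up to commutators and bounded paths. -/
noncomputable def chainClass : (Γ →₀ ℝ) →+ Additive (AsymptoticAbelianization ν) :=
  Finsupp.liftAddHom fun g => AddMonoidHom.mk'
    (fun c => Additive.ofMul (asymptoticClass ν fun t => g ^ ⌊t * c⌋)) fun c d => by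
      rw [← ofMul_mul, ← map_mul,
        asymptoticClass_eq_of_div_mem (zpow_floor_add_div_mem_boundedPaths g c d)]

/-- The path `s` is asymptotic to `t ↦ t • v`, for a real chain `v`. -/
def Realizes (s : ℝ → Γ) (v : Γ →₀ ℝ) : Prop :=
  Additive.ofMul (asymptoticClass ν s) = chainClass ν v

theorem realizes_one_zero : Realizes ν 1 0 := by
  simp [Realizes]

theorem realizes_single (g : Γ) (c : ℝ) :
    Realizes ν (fun t => g ^ ⌊t * c⌋) (Finsupp.single g c) := by
  rw [Realizes, chainClass, Finsupp.liftAddHom_apply_single, AddMonoidHom.mk'_apply]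

variable {ν} {s s' : ℝ → Γ} {v w : Γ →₀ ℝ}

theorem Realizes.mul (hs : Realizes ν s v) (hs' : Realizes ν s' w) :
    Realizes ν (s * s') (v + w) := by
  rw [Realizes, map_mul, ofMul_mul, hs, hs', map_add]

theorem Realizes.inv (hs : Realizes ν s v) : Realizes ν s⁻¹ (-v) := by
  rw [Realizes, map_inv, ofMul_inv, hs, map_neg]

theorem Realizes.div (hs : Realizes ν s v) (hs' : Realizes ν s' w) :
    Realizes ν (s / s') (v - w) := by
  rw [Realizes, map_div, ofMul_div, hs, hs', map_sub]

theorem Realizes.zpow (hs : Realizes ν s v) (n : ℤ) : Realizes ν (s ^ n) (n • v) := by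
  rw [Realizes, map_zpow, ofMul_zpow, hs, map_zsmul]

theorem Realizes.div_mem_boundedPaths (hK : ∀ a b : Γ, ν ⁅a, b⁆ ≤ K) (hs : Realizes ν s v)
    (hs' : Realizes ν s' v) : s / s' ∈ boundedPaths ν := by
  rw [← ker_asymptoticClass hK, MonoidHom.mem_ker, map_div, div_eq_one]
  exact Additive.ofMul.injective (hs.trans hs'.symm)

theorem exists_forall_realizes_smul (v : Γ →₀ ℝ) :
    ∃ s : ℝ → Γ, ∀ c : ℝ, Realizes ν (fun t => s (t * c)) (c • v) := by
  induction v using Finsupp.induction_linear with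
  | zero => exact ⟨1, fun c => by rw [smul_zero]; exact realizes_one_zero ν⟩
  | add v w hv hw =>
    obtain ⟨s, hs⟩ := hv
    obtain ⟨s', hs'⟩ := hw
    exact ⟨s * s', fun c => by rw [smul_add]; exact (hs c).mul (hs' c)⟩
  | single g d =>
    exact ⟨fun t => g ^ ⌊t * d⌋, fun c => by
      simpa [mul_assoc] using realizes_single ν g (c * d)⟩

theorem Realizes.comp_mul_right (hK : ∀ a b : Γ, ν ⁅a, b⁆ ≤ K) (hs : Realizes ν s v) (c : ℝ) :
    Realizes ν (fun t => s (t * c)) (c • v) := by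
  obtain ⟨s', hs'⟩ := exists_forall_realizes_smul (ν := ν) v
  obtain ⟨D, hD⟩ := hs.div_mem_boundedPaths hK (by simpa using hs' 1)
  exact (congrArg Additive.ofMul
    (asymptoticClass_eq_of_div_mem ⟨D, fun t => hD (t * c)⟩)).trans (hs' c)

end Realization

section GrowthRate

variable {Γ : Type*} [Group Γ] (ν : GroupSeminorm Γ)

/-- The linear growth rates achieved by the paths realizing a chain. -/
def growthBounds (v : Γ →₀ ℝ) : Set ℝ :=
  {C | ∃ s, Realizes ν s v ∧ ∀ᶠ t in atTop, ν (s t) ≤ C * t}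

/-- The optimal linear growth rate of the paths realizing a chain: a stable length on `Γ →₀ ℝ`. -/
noncomputable def growthRate (v : Γ →₀ ℝ) : ℝ :=
  sInf (growthBounds ν v)

variable {ν} {K : ℝ} {s : ℝ → Γ} {v w : Γ →₀ ℝ} {C D : ℝ}

theorem nonneg_of_mem_growthBounds (hC : C ∈ growthBounds ν v) : 0 ≤ C := by
  obtain ⟨s, -, hs⟩ := hC
  obtain ⟨t, ht, ht_pos⟩ := (hs.and (eventually_gt_atTop 0)).exists
  exact nonneg_of_mul_nonneg_left ((apply_nonneg ν _).trans ht) ht_pos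

theorem bddBelow_growthBounds : BddBelow (growthBounds ν v) :=
  ⟨0, fun _ => nonneg_of_mem_growthBounds⟩

theorem add_mem_growthBounds (hC : C ∈ growthBounds ν v) (hD : D ∈ growthBounds ν w) :
    C + D ∈ growthBounds ν (v + w) := by
  obtain ⟨s, hs, hsC⟩ := hC
  obtain ⟨s', hs', hsD⟩ := hD
  refine ⟨s * s', hs.mul hs', ?_⟩
  filter_upwards [hsC, hsD] with t hC hD
  rw [add_mul]
  exact (map_mul_le_add ν _ _).trans (add_le_add hC hD)

theorem mul_mem_growthBounds_smul (hK : ∀ a b : Γ, ν ⁅a, b⁆ ≤ K) {c : ℝ} (hc : 0 < c)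
    (hC : C ∈ growthBounds ν v) : c * C ∈ growthBounds ν (c • v) := by
  obtain ⟨s, hs, hsC⟩ := hC
  refine ⟨_, hs.comp_mul_right hK c, ?_⟩
  filter_upwards [(tendsto_id.atTop_mul_const hc).eventually hsC] with t ht
  exact ht.trans_eq (by rw [id]; ring)

theorem growthBounds_nonempty (v : Γ →₀ ℝ) : (growthBounds ν v).Nonempty := by
  induction v using Finsupp.induction_linear with
  | zero => exact ⟨0, 1, realizes_one_zero ν, by simp⟩
  | add v w hv hw => exact ⟨_, add_mem_growthBounds hv.some_mem hw.some_mem⟩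
  | single g c =>
    refine ⟨(|c| + 1) * ν g, _, realizes_single ν g c, ?_⟩
    filter_upwards [eventually_ge_atTop 1] with t ht
    have abs_floor_le : |(⌊t * c⌋ : ℝ)| ≤ (|c| + 1) * t := by
      have h_sub : |(⌊t * c⌋ : ℝ) - t * c| ≤ 1 := by
        rw [abs_le]
        constructor <;> linarith [Int.floor_le (t * c), Int.sub_one_lt_floor (t * c)]
      have h_abs := abs_sub_abs_le_abs_sub (⌊t * c⌋ : ℝ) (t * c)
      rw [abs_mul, abs_of_nonneg (by linarith : (0 : ℝ) ≤ t)] at h_abs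
      linarith
    calc ν (g ^ ⌊t * c⌋) ≤ |(⌊t * c⌋ : ℝ)| * ν g := map_zpow_le_abs_mul ν g _
      _ ≤ (|c| + 1) * t * ν g := mul_le_mul_of_nonneg_right abs_floor_le (apply_nonneg ν g)
      _ = (|c| + 1) * ν g * t := by ring

theorem Realizes.growthRate_le (hs : Realizes ν s v) (hC : ∀ᶠ t in atTop, ν (s t) ≤ C * t) :
    growthRate ν v ≤ C :=
  csInf_le bddBelow_growthBounds ⟨s, hs, hC⟩

theorem growthRate_add_le (v w : Γ →₀ ℝ) :
    growthRate ν (v + w) ≤ growthRate ν v + growthRate ν w := by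
  rw [growthRate, growthRate, growthRate, ← csInf_add (growthBounds_nonempty v)
    bddBelow_growthBounds (growthBounds_nonempty w) bddBelow_growthBounds]
  refine csInf_le_csInf bddBelow_growthBounds
    ((growthBounds_nonempty v).add (growthBounds_nonempty w)) ?_
  rintro _ ⟨C, hC, D, hD, rfl⟩
  exact add_mem_growthBounds hC hD

theorem growthRate_smul (hK : ∀ a b : Γ, ν ⁅a, b⁆ ≤ K) {c : ℝ} (hc : 0 < c) (v : Γ →₀ ℝ) :
    growthRate ν (c • v) = c * growthRate ν v := by
  have smul_le {c : ℝ} (hc : 0 < c) (v : Γ →₀ ℝ) :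
      growthRate ν (c • v) ≤ c * growthRate ν v := by
    rw [mul_comm, ← div_le_iff₀ hc]
    refine le_csInf (growthBounds_nonempty v) fun C hC => ?_
    rw [div_le_iff₀ hc, mul_comm]
    exact csInf_le bddBelow_growthBounds (mul_mem_growthBounds_smul hK hc hC)
  refine (smul_le hc v).antisymm ?_
  have h := smul_le (inv_pos.2 hc) (c • v)
  rwa [inv_smul_smul₀ hc.ne', le_inv_mul_iff₀ hc] at h

theorem le_growthRate_single_of_tendsto (hK : ∀ a b : Γ, ν ⁅a, b⁆ ≤ K) {f : Γ} {L : ℝ}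
    (hL : Tendsto (fun n : ℕ => ν (f ^ n) / n) atTop (𝓝 L)) :
    L ≤ growthRate ν (Finsupp.single f 1) := by
  refine le_csInf (growthBounds_nonempty _) ?_
  rintro C ⟨s, hs, hsC⟩
  obtain ⟨D, hD⟩ := (realizes_single ν f 1).div_mem_boundedPaths hK hs
  have h_lim : Tendsto (fun n : ℕ => D / n + C) atTop (𝓝 C) := by
    simpa using (tendsto_const_div_atTop_nhds_zero_nat D).add_const C
  refine le_of_tendsto_of_tendsto hL h_lim ?_
  filter_upwards [tendsto_natCast_atTop_atTop.eventually hsC,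
    tendsto_natCast_atTop_atTop.eventually (eventually_gt_atTop (0 : ℝ))] with n hn hn_pos
  have h_pow : ν (f ^ n) ≤ D + C * n := by
    have h := map_mul_le_add ν (f ^ n / s n) (s n)
    have hDn := hD n
    simp only [Pi.div_apply, mul_one, Int.floor_natCast, zpow_natCast] at hDn
    rw [div_mul_cancel] at h
    linarith
  rw [div_le_iff₀ hn_pos, add_mul, div_mul_cancel₀ _ hn_pos.ne']
  exact h_pow

theorem Realizes.abs_map_le {Φ : (Γ →₀ ℝ) →ₗ[ℝ] ℝ} (hs : Realizes ν s v)
    (hΦ : ∀ v, Φ v ≤ growthRate ν v) (hC : ∀ᶠ t in atTop, ν (s t) ≤ C * t) : |Φ v| ≤ C := by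
  refine abs_le'.2 ⟨(hΦ v).trans (hs.growthRate_le hC), ?_⟩
  rw [← map_neg]
  exact (hΦ (-v)).trans (hs.inv.growthRate_le (by simpa using hC))

theorem isHomogeneousQuasimorphism_of_le_growthRate (hK : ∀ a b : Γ, ν ⁅a, b⁆ ≤ K)
    {Φ : (Γ →₀ ℝ) →ₗ[ℝ] ℝ} (hΦ : ∀ v, Φ v ≤ growthRate ν v) :
    IsHomogeneousQuasimorphism fun a => Φ (Finsupp.single a 1) where
  exists_defect_le := by
    refine ⟨2 * K, fun a b => ?_⟩
    have h_realizes := ((realizes_single ν a 1).mul (realizes_single ν b 1)).div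
      (realizes_single ν (a * b) 1)
    have h_abs := h_realizes.abs_map_le (C := 2 * K) hΦ (by
      have hK_nonneg : 0 ≤ K := (apply_nonneg ν _).trans (hK 1 1)
      filter_upwards [eventually_ge_atTop 0] with t ht
      obtain ⟨n, hn⟩ := Int.eq_ofNat_of_zero_le (Int.floor_nonneg.2 ht)
      have hn_le : (n : ℝ) ≤ t := by
        simpa [hn] using Int.floor_le t
      simp only [Pi.div_apply, Pi.mul_apply, mul_one, hn, zpow_natCast]
      exact (map_pow_mul_pow_div_mul_pow_le hK a b n).trans (by gcongr))
    rw [map_sub, map_add, abs_sub_comm] at h_abs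
    rwa [sub_sub]
  map_zpow a n := by
    have h_one : (fun t : ℝ => (a ^ n) ^ ⌊t * 1⌋) / (fun t => a ^ ⌊t * 1⌋) ^ n = 1 := by
      ext t
      simp [← zpow_mul, mul_comm]
    have h_realizes := (realizes_single ν (a ^ n) 1).div ((realizes_single ν a 1).zpow n)
    have h_abs := h_realizes.abs_map_le (C := 0) hΦ (by
      simp only [h_one, Pi.one_apply, map_one_eq_zero, zero_mul, le_refl, eventually_true])
    rw [map_sub, map_zsmul, zsmul_eq_mul] at h_abs
    exact sub_eq_zero.1 (abs_nonpos_iff.1 h_abs)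

theorem exists_isHomogeneousQuasimorphism_ge_of_commutatorElement_le (hK : ∀ a b : Γ, ν ⁅a, b⁆ ≤ K)
    {f : Γ} {L : ℝ} (hL : Tendsto (fun n : ℕ => ν (f ^ n) / n) atTop (𝓝 L)) :
    ∃ r : Γ → ℝ, IsHomogeneousQuasimorphism r ∧ L ≤ r f := by
  obtain ⟨Φ, hΦf, hΦ⟩ := exists_linearMap_eq_and_le_of_sublinear
    (fun _ hc => growthRate_smul hK hc) growthRate_add_le (Finsupp.single f 1)
  exact ⟨_, isHomogeneousQuasimorphism_of_le_growthRate hK hΦ,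
    (le_growthRate_single_of_tendsto hK hL).trans_eq hΦf.symm⟩

end GrowthRate

section ConjInvariant

variable {Γ : Type*} [Group Γ] {ν : GroupSeminorm Γ}

theorem map_commutatorElement_le_left (hconj : ∀ f g : Γ, ν (g * f * g⁻¹) = ν f) (x y : Γ) :
    ν ⁅x, y⁆ ≤ 2 * ν x := by
  have h := map_mul_le_add ν x (y * x⁻¹ * y⁻¹)
  rw [hconj, map_inv_eq_map] at h
  rw [commutatorElement_def, mul_assoc, mul_assoc, ← mul_assoc y]
  linarith

theorem map_commutatorElement_le_right (hconj : ∀ f g : Γ, ν (g * f * g⁻¹) = ν f) (x y : Γ) :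
    ν ⁅x, y⁆ ≤ 2 * ν y := by
  rw [← commutatorElement_inv, map_inv_eq_map]
  exact map_commutatorElement_le_left hconj y x

theorem map_commutatorElement_mul_left_le (hconj : ∀ f g : Γ, ν (g * f * g⁻¹) = ν f)
    (x u y : Γ) : ν ⁅x * u, y⁆ ≤ ν ⁅x, y⁆ + 2 * ν u := by
  have h := map_mul_le_add ν (x * ⁅u, y⁆ * x⁻¹) ⁅x, y⁆
  rw [hconj, ← commutatorElement_mul_left_eq_conj_mul] at h
  linarith [map_commutatorElement_le_left hconj u y]

theorem map_commutatorElement_mul_right_le (hconj : ∀ f g : Γ, ν (g * f * g⁻¹) = ν f)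
    (x y v : Γ) : ν ⁅x, y * v⁆ ≤ ν ⁅x, y⁆ + 2 * ν v := by
  rw [← commutatorElement_inv, map_inv_eq_map, ← commutatorElement_inv y, map_inv_eq_map]
  exact map_commutatorElement_mul_left_le hconj y v x

theorem commutatorElement_eq_of_commute_conj {t x y : Γ} (h : Commute (t * x * t⁻¹) y) :
    ⁅x, y⁆ = ⁅⁅x, t⁆, y⁆ := by
  have h_split : ⁅x, t⁆ = x * (t * x * t⁻¹)⁻¹ := by
    rw [commutatorElement_def]
    group
  rw [h_split, commutatorElement_mul_left_eq_conj_mul,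
    commutatorElement_eq_one_iff_commute.2 h.inv_left, mul_one, mul_inv_cancel, one_mul]

theorem map_commutatorElement_le_of_commute_conj (hconj : ∀ f g : Γ, ν (g * f * g⁻¹) = ν f)
    {t x y : Γ} (h : Commute (t * x * t⁻¹) y) : ν ⁅x, y⁆ ≤ 4 * ν t := by
  rw [commutatorElement_eq_of_commute_conj h]
  linarith [map_commutatorElement_le_left hconj ⁅x, t⁆ y,
    map_commutatorElement_le_right hconj x t]

end ConjInvariant

theorem monoidHom_eq_one_of_isMulTorsion_abelianization {Γ M : Type*} [Group Γ] [CommGroup M]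
    [IsMulTorsionFree M] (hΓ : IsMulTorsion (Abelianization Γ)) (φ : Γ →* M) : φ = 1 := by
  ext g
  obtain ⟨n, hn, h⟩ := isOfFinOrder_iff_pow_eq_one.1 (hΓ (Abelianization.of g))
  refine (pow_eq_one_iff_left hn.ne').1 ?_
  simpa using congrArg (Abelianization.lift φ) h

namespace GBar

open SemidirectProduct

variable {G : Type*} [Group G]

/-- The element `t` of order two swapping the factors of `G × G`. -/
def swap : GBar G :=
  inr (Multiplicative.ofAdd 1)

theorem swap_mul_inl_mul_swap_inv (a b : G) :
    swap * inl (a, b) * swap⁻¹ = (inl (b, a) : GBar G) := by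
  rw [swap, ← map_inv, ← inl_aut]
  rfl

theorem inl_inv_self_eq_commutatorElement (b : G) :
    (inl (b⁻¹, b) : GBar G) = ⁅(inl (b⁻¹, 1) : GBar G), swap⁆ := by
  rw [commutatorElement_def, mul_assoc, mul_assoc, ← mul_assoc swap, ← map_inv,
    swap_mul_inl_mul_swap_inv, ← map_mul]
  simp

theorem map_commutatorElement_inl_le {ν : GroupSeminorm (GBar G)}
    (hconj : ∀ f g, ν (g * f * g⁻¹) = ν f) (g h : G) :
    ν ⁅(inl (g, 1) : GBar G), inl (h, 1)⁆ ≤ 4 * ν swap := by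
  refine map_commutatorElement_le_of_commute_conj hconj ?_
  rw [swap_mul_inl_mul_swap_inv]
  exact Commute.map (Prod.commute_iff.2 ⟨Commute.one_left h, Commute.one_right g⟩) _

theorem exists_eq_inl_mul_and_map_le {ν : GroupSeminorm (GBar G)}
    (hconj : ∀ f g, ν (g * f * g⁻¹) = ν f) (x : GBar G) :
    ∃ (g : G) (u : GBar G), x = inl (g, 1) * u ∧ ν u ≤ 3 * ν swap := by
  obtain ⟨⟨a, b⟩, s⟩ := x
  have h_inr : ν (inr s) ≤ ν swap := by
    obtain rfl | rfl : s = 1 ∨ s = Multiplicative.ofAdd 1 := by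
      revert s
      decide
    · simp
    · exact le_rfl
  have h_inl : ν (inl (b⁻¹, b)) ≤ 2 * ν swap := by
    rw [inl_inv_self_eq_commutatorElement]
    exact map_commutatorElement_le_right hconj _ _
  refine ⟨a * b, inl (b⁻¹, b) * inr s, ?_, ?_⟩
  · rw [← mul_assoc, ← map_mul, SemidirectProduct.mk_eq_inl_mul_inr]
    simp
  · linarith [map_mul_le_add ν (inl (b⁻¹, b)) (inr s)]

theorem map_commutatorElement_le {ν : GroupSeminorm (GBar G)}
    (hconj : ∀ f g, ν (g * f * g⁻¹) = ν f) (x y : GBar G) : ν ⁅x, y⁆ ≤ 16 * ν swap := by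
  obtain ⟨g, u, rfl, hu⟩ := exists_eq_inl_mul_and_map_le hconj x
  obtain ⟨h, v, rfl, hv⟩ := exists_eq_inl_mul_and_map_le hconj y
  linarith [map_commutatorElement_mul_left_le hconj (inl (g, 1)) u
      (inl (h, 1) * v),
    map_commutatorElement_mul_right_le hconj (inl (g, 1))
      (inl (h, 1)) v,
    map_commutatorElement_inl_le hconj g h]

theorem monoidHom_eq_one {M : Type*} [CommGroup M] [IsMulTorsionFree M]
    (hG : IsMulTorsion (Abelianization G)) (φ : GBar G →* M) : φ = 1 := by
  refine SemidirectProduct.hom_ext (MonoidHom.ext fun p => ?_)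
    (monoidHom_eq_one_of_isMulTorsion_abelianization isMulTorsion_of_finite _)
  have h_left := monoidHom_eq_one_of_isMulTorsion_abelianization hG
    ((φ.comp inl).comp (MonoidHom.inl G G))
  have h_right := monoidHom_eq_one_of_isMulTorsion_abelianization hG
    ((φ.comp inl).comp (MonoidHom.inr G G))
  rw [← MonoidHom.coprod_unique (φ.comp inl), h_left, h_right]
  simp

end GBar

theorem GBar_quasimorphism_of_stably_unbounded_norm_general {G : Type*} [Group G]
    (hG : IsMulTorsion (Abelianization G)) (ν : GroupSeminorm (GBar G))
    (hconj : ∀ f g, ν (g * f * g⁻¹) = ν f)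
    (hstab : ∃ (f : GBar G) (L : ℝ), L ≠ 0 ∧ Tendsto (fun n : ℕ => ν (f ^ n) / n) atTop (𝓝 L)) :
    ∃ r : GBar G → ℝ,
      IsHomogeneousQuasimorphism r ∧ ¬ ∀ a b : GBar G, r (a * b) = r a + r b := by
  obtain ⟨f, L, hL_ne, hL⟩ := hstab
  have hL_pos : 0 < L := hL_ne.symm.lt_of_le
    (ge_of_tendsto' hL fun n => div_nonneg (apply_nonneg ν _) n.cast_nonneg)
  obtain ⟨r, hr, hLr⟩ := exists_isHomogeneousQuasimorphism_ge_of_commutatorElement_le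
    (GBar.map_commutatorElement_le hconj) hL
  refine ⟨r, hr, fun hadd => (hL_pos.trans_le hLr).ne' ?_⟩
  exact DFunLike.congr_fun
    (GBar.monoidHom_eq_one hG (MonoidHom.mk' (fun a => Multiplicative.ofAdd (r a)) hadd)) f

/-- If `G` has finite abelianization and `Ḡ = (G × G) ⋊ ℤ/2` admits a stably
unbounded conjugation-invariant norm, then `Ḡ` admits a non-trivial homogeneous
quasi-morphism. -/
theorem GBar_quasimorphism_of_stably_unbounded_norm {G : Type*} [Group G]
    (hG : Finite (Abelianization G))
    (ν : GBar G → ℝ) (hν : IsConjInvNorm ν)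
    (hstab : ∃ (f : GBar G) (L : ℝ), L ≠ 0 ∧
      Filter.Tendsto (fun n : ℕ => ν (f ^ n) / n) Filter.atTop (nhds L)) :
    ∃ r : GBar G → ℝ,
      (∃ C : ℝ, ∀ a b : GBar G, |r (a * b) - r a - r b| ≤ C) ∧
      (∀ (a : GBar G) (n : ℤ), r (a ^ n) = n * r a) ∧
      ¬ (∀ a b : GBar G, r (a * b) = r a + r b) := by
  obtain ⟨r, hr, hr_not_hom⟩ := GBar_quasimorphism_of_stably_unbounded_norm_general
    isMulTorsion_of_finite hν.toGroupSeminorm hν.2.2.2.2.1 hstab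
  exact ⟨r, hr.exists_defect_le, hr.map_zpow, hr_not_hom⟩
end

section
/- Let G be a group equipped with a conjugation-invariant norm ν, let H ≤ G be a subgroup, and let φ ∈ G be such that the subgroups H and φHφ⁻¹ commute elementwise. Then for all f,g ∈ H one has [f,g] = [f·φf⁻¹φ⁻¹, g] and consequently ν([f,g]) ≤ 4ν(φ). -/
open scoped commutatorElement

/-! Since `f * (φ * f⁻¹ * φ⁻¹) = ⁅f, φ⁆`, displacement by `φ` turns `⁅f, g⁆` into `⁅⁅f, φ⁆, g⁆`.
A conjugation-invariant length of a commutator is controlled by either of its two entries alone, and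
using this twice passes from `⁅⁅f, φ⁆, g⁆` to `⁅f, φ⁆`, and from `⁅f, φ⁆` to `φ`. -/

theorem commutatorElement_eq_mul_conj_inv {G : Type*} [Group G] (x y : G) :
    ⁅x, y⁆ = x * (y * x⁻¹ * y⁻¹) := by
  simp only [commutatorElement_def, mul_assoc]

theorem commutatorElement_mul_left_of_commute {G : Type*} [Group G] {x y z : G}
    (h : Commute y z) : ⁅x * y, z⁆ = ⁅x, z⁆ := by
  rw [commutatorElement_mul_left_eq_conj_mul, h.commutator_eq, mul_one, mul_inv_cancel, one_mul]

section ConjInvariant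

variable {G M : Type*} [Group G] [Add M] [LE M] {ν : G → M}

theorem apply_commutatorElement_le_left (hmul : ∀ x y, ν (x * y) ≤ ν x + ν y)
    (hconj : ∀ x y, ν (y * x * y⁻¹) = ν x) (x y : G) : ν ⁅x, y⁆ ≤ ν x + ν x⁻¹ := by
  simpa only [commutatorElement_eq_mul_conj_inv, hconj] using hmul x (y * x⁻¹ * y⁻¹)

theorem apply_commutatorElement_le_right (hmul : ∀ x y, ν (x * y) ≤ ν x + ν y)
    (hconj : ∀ x y, ν (y * x * y⁻¹) = ν x) (x y : G) : ν ⁅x, y⁆ ≤ ν y + ν y⁻¹ := by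
  simpa only [commutatorElement_def, hconj] using hmul (x * y * x⁻¹) y⁻¹

end ConjInvariant

theorem apply_commutatorElement_commutatorElement_le {G M : Type*} [Group G] [AddMonoid M]
    [Preorder M] [AddLeftMono M] [AddRightMono M] {ν : G → M}
    (hmul : ∀ x y, ν (x * y) ≤ ν x + ν y) (hconj : ∀ x y, ν (y * x * y⁻¹) = ν x) (x y z : G) :
    ν ⁅⁅x, y⁆, z⁆ ≤ 2 • (ν y + ν y⁻¹) :=
  calc
    ν ⁅⁅x, y⁆, z⁆ ≤ ν ⁅x, y⁆ + ν ⁅y, x⁆ := by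
      simpa only [commutatorElement_inv] using
        apply_commutatorElement_le_left hmul hconj ⁅x, y⁆ z
    _ ≤ (ν y + ν y⁻¹) + (ν y + ν y⁻¹) :=
      add_le_add (apply_commutatorElement_le_right hmul hconj x y)
        (apply_commutatorElement_le_left hmul hconj y x)
    _ = 2 • (ν y + ν y⁻¹) := (two_nsmul _).symm

theorem norm_commutator_le_of_displaceable_general {G M : Type*} [Group G] [AddMonoid M]
    [Preorder M] [AddLeftMono M] [AddRightMono M] {ν : G → M}
    (hmul : ∀ x y, ν (x * y) ≤ ν x + ν y) (hconj : ∀ x y, ν (y * x * y⁻¹) = ν x)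
    {f g φ : G} (hd : Commute g (φ * f * φ⁻¹)) :
    ⁅f, g⁆ = ⁅f * (φ * f⁻¹ * φ⁻¹), g⁆ ∧ ν ⁅f, g⁆ ≤ 2 • (ν φ + ν φ⁻¹) := by
  have hcomm : Commute (φ * f⁻¹ * φ⁻¹) g := conj_inv (a := f) (b := φ) ▸ hd.symm.inv_left
  have heq : ⁅f, g⁆ = ⁅f * (φ * f⁻¹ * φ⁻¹), g⁆ :=
    (commutatorElement_mul_left_of_commute hcomm).symm
  refine ⟨heq, ?_⟩
  rw [heq, ← commutatorElement_eq_mul_conj_inv f φ]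
  exact apply_commutatorElement_commutatorElement_le hmul hconj f φ g

/-- If `H` and `φHφ⁻¹` commute elementwise, then for `f, g ∈ H` one has
`[f,g] = [f·φf⁻¹φ⁻¹, g]` and hence `ν([f,g]) ≤ 4ν(φ)`. -/
theorem norm_commutator_le_of_displaceable {G : Type*} [Group G]
    (ν : G → ℝ) (hν : IsConjInvNorm ν) (H : Subgroup G) (φ : G)
    (hd : ∀ a ∈ H, ∀ b ∈ H, Commute a (φ * b * φ⁻¹)) :
    ∀ f ∈ H, ∀ g ∈ H,
      ⁅f, g⁆ = ⁅f * (φ * f⁻¹ * φ⁻¹), g⁆ ∧ ν ⁅f, g⁆ ≤ 4 * ν φ := by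
  obtain ⟨-, -, hinv, hmul, hconj, -⟩ := hν
  exact fun f hf g hg => (norm_commutator_le_of_displaceable_general hmul hconj
    (hd g hg f hf)).imp_right fun hle => hle.trans_eq (by rw [hinv, two_nsmul]; ring)
end

section
/- Let G be a group, let H ≤ G be a subgroup, let m ≥ 1, and suppose there exists φ ∈ G such that the subgroups φⁱHφ⁻ⁱ, i = 0,1,…,m, pairwise commute elementwise. Then every element x ∈ G that is a product of m commutators [f₁,g₁]⋯[f_m,g_m] with all f_i, g_i ∈ H satisfies cl_G(x) ≤ 2, i.e., x is a product of at most two commutators of elements of G. -/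
open scoped commutatorElement

/-!
Write `cᵢ = ⁅fᵢ, gᵢ⁆`, `Sᵢ = cᵢ ⋯ cₙ`, and let `α` be conjugation by `φ`. For
`z = S₁ · α S₂ ⋯ αⁿ⁻¹ Sₙ`, the displaced factors can be reordered in `z (α z)⁻¹`, where `Sᵢ₊₁`
meets `Sᵢ⁻¹` and leaves `cᵢ⁻¹`; hence `S₁ = ⁅z, φ⁆ · α c₁ ⋯ αⁿ cₙ`. Elements of different
displaced copies commute, so the second factor is the single commutator
`⁅α f₁ ⋯ αⁿ fₙ, α g₁ ⋯ αⁿ gₙ⁆`. Only the exponents `1, …, n` meet each other, which is why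
`m`-displacement handles `n = m + 1` commutators.
-/

section Monoid

variable {M : Type*} [Monoid M]

/-- `Displaces α s m` says that the endomorphism `α` `m`-displaces the set `s`: the sets
`αⁱ(s)`, `i = 0, …, m`, pairwise commute elementwise. The paper's notion for a group element `φ`
is the case where `α` is conjugation by `φ`. -/
def Displaces (α : M →* M) (s : Set M) (m : ℕ) : Prop :=
  ∀ i j : ℕ, i ≤ m → j ≤ m → i ≠ j → ∀ a ∈ s, ∀ b ∈ s, Commute (α^[i] a) (α^[j] b)

/-- The product `α a₁ * α² a₂ * ⋯ * αⁿ aₙ` of the successive translates of the entries of a list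
`[a₁, …, aₙ]`, encoded by the Horner scheme `α (a₁ * α (a₂ * ⋯))`. The exponents start at `1`. -/
def translateProd (α : M →* M) (l : List M) : M :=
  l.foldr (fun a t => α (a * t)) 1

@[simp]
theorem translateProd_nil (α : M →* M) : translateProd α [] = 1 :=
  rfl

@[simp]
theorem translateProd_cons (α : M →* M) (a : M) (l : List M) :
    translateProd α (a :: l) = α (a * translateProd α l) :=
  rfl

namespace Displaces

variable {α : M →* M} {s : Set M} {m : ℕ} {a : M} {l : List M}

theorem commute_iterate_translateProd (h : Displaces α s m) (ha : a ∈ s) (hl : ∀ b ∈ l, b ∈ s)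
    {k : ℕ} (hk : k + l.length ≤ m) : Commute a (α^[k] (translateProd α l)) := by
  induction l generalizing k with
  | nil => simp
  | cons b l ih =>
    rw [List.forall_mem_cons] at hl
    rw [List.length_cons] at hk
    rw [translateProd_cons, ← Function.iterate_succ_apply, iterate_map_mul]
    have head : Commute a (α^[k + 1] b) :=
      h 0 (k + 1) (by lia) (by lia) (by lia) a ha b hl.1
    exact head.mul_right (ih hl.2 (by lia))

theorem commute_translateProd (h : Displaces α s m) (ha : a ∈ s) (hl : ∀ b ∈ l, b ∈ s)
    (hlm : l.length ≤ m) : Commute a (translateProd α l) :=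
  h.commute_iterate_translateProd (k := 0) ha hl (by lia)

end Displaces

end Monoid

section Group

variable {G : Type*} [Group G]

theorem commute_commutatorElement_right {a b c : G} (hb : Commute a b) (hc : Commute a c) :
    Commute a ⁅b, c⁆ :=
  ((hb.mul_right hc).mul_right hb.inv_right).mul_right hc.inv_right

theorem commutatorElement_mul_mul_of_commute {a b c d : G} (hac : Commute a c) (had : Commute a d)
    (hbc : Commute b c) (hbd : Commute b d) : ⁅a * c, b * d⁆ = ⁅a, b⁆ * ⁅c, d⁆ := by
  have ha : Commute a ⁅c, d⁆ := commute_commutatorElement_right hac had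
  have hb : Commute b ⁅c, d⁆ := commute_commutatorElement_right hbc hbd
  have expand_right : ⁅c, b * d⁆ = ⁅c, d⁆ := by
    rw [commutatorElement_mul_right_eq_mul_conj, hbc.symm.commutator_eq, one_mul, hb.eq,
      mul_inv_cancel_right]
  have expand_left : ⁅a, b * d⁆ = ⁅a, b⁆ := by
    rw [commutatorElement_mul_right_eq_mul_conj, had.commutator_eq, mul_one, mul_inv_cancel_right]
  calc ⁅a * c, b * d⁆ = a * ⁅c, b * d⁆ * a⁻¹ * ⁅a, b * d⁆ :=
        commutatorElement_mul_left_eq_conj_mul a c (b * d)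
    _ = ⁅c, d⁆ * ⁅a, b⁆ := by rw [expand_right, expand_left, ha.eq, mul_inv_cancel_right]
    _ = ⁅a, b⁆ * ⁅c, d⁆ := commute_commutatorElement_right ha.symm hb.symm

theorem displaces_conj_iff {φ : G} {s : Set G} {m : ℕ} :
    Displaces (MulAut.conj φ).toMonoidHom s m ↔ ∀ i j : ℕ, i ≤ m → j ≤ m → i ≠ j →
      ∀ a ∈ s, ∀ b ∈ s, Commute (φ ^ i * a * (φ ^ i)⁻¹) (φ ^ j * b * (φ ^ j)⁻¹) := by
  have iterate_conj (i : ℕ) (a : G) :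
      (MulAut.conj φ).toMonoidHom^[i] a = φ ^ i * a * (φ ^ i)⁻¹ := by
    induction i with
    | zero => simp
    | succ i ih =>
      rw [Function.iterate_succ_apply', ih]
      simp [pow_succ', mul_assoc]
  simp only [Displaces, iterate_conj]

namespace Displaces

variable {α : G →* G} {s : Set G} {m : ℕ}

theorem exists_prod_eq_mul_translateProd (h : Displaces α s m) {l : List G} (hl : ∀ a ∈ l, a ∈ s)
    (hlm : l.length ≤ m + 1) : ∃ z : G, l.prod = z * (α z)⁻¹ * translateProd α l := by
  induction l with
  | nil => exact ⟨1, by simp⟩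
  | cons a l ih =>
    rw [List.forall_mem_cons] at hl
    rw [List.length_cons, Nat.add_le_add_iff_right] at hlm
    obtain ⟨z, hz⟩ := ih hl.2 (by lia)
    set t := translateProd α l
    have commute_prod : Commute l.prod t :=
      .list_prod_left _ _ fun b hb => h.commute_translateProd (hl.2 b hb) hl.2 hlm
    refine ⟨a * l.prod * α z, ?_⟩
    have z_mul : z * (α z)⁻¹ * l.prod⁻¹ = t⁻¹ := by
      rw [eq_mul_inv_of_mul_eq hz.symm, commute_prod.inv_right.eq, mul_inv_cancel_right]
    have telescope : α z * (α (a * l.prod * α z))⁻¹ = (α (a * t))⁻¹ :=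
      calc α z * (α (a * l.prod * α z))⁻¹ = α (z * (α z)⁻¹ * l.prod⁻¹ * a⁻¹) := by
            simp only [map_mul, map_inv, mul_inv_rev, mul_assoc]
        _ = (α (a * t))⁻¹ := by rw [z_mul, ← mul_inv_rev, map_inv]
    rw [List.prod_cons, translateProd_cons, mul_assoc (a * l.prod), telescope,
      inv_mul_cancel_right]

theorem translateProd_commutatorElement (h : Displaces α s m) {l : List (G × G)}
    (hl : ∀ p ∈ l, p.1 ∈ s ∧ p.2 ∈ s) (hlm : l.length ≤ m + 1) :
    translateProd α (l.map fun p => ⁅p.1, p.2⁆) =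
      ⁅translateProd α (l.map Prod.fst), translateProd α (l.map Prod.snd)⁆ := by
  induction l with
  | nil => simp
  | cons p l ih =>
    rw [List.forall_mem_cons] at hl
    rw [List.length_cons, Nat.add_le_add_iff_right] at hlm
    have commute_fst {a : G} (ha : a ∈ s) : Commute a (translateProd α (l.map Prod.fst)) :=
      h.commute_translateProd ha (List.forall_mem_map.2 fun q hq => (hl.2 q hq).1) (by simpa)
    have commute_snd {a : G} (ha : a ∈ s) : Commute a (translateProd α (l.map Prod.snd)) :=
      h.commute_translateProd ha (List.forall_mem_map.2 fun q hq => (hl.2 q hq).2) (by simpa)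
    simp only [List.map_cons, translateProd_cons]
    rw [ih hl.2 (by lia), ← map_commutatorElement,
      commutatorElement_mul_mul_of_commute (commute_fst hl.1.1) (commute_snd hl.1.1)
        (commute_fst hl.1.2) (commute_snd hl.1.2)]

end Displaces

theorem cl_le_two_of_m_displaceable_general (H : Subgroup G) (m : ℕ) (φ : G)
    (hd : ∀ i j : ℕ, i ≤ m → j ≤ m → i ≠ j →
      ∀ a ∈ H, ∀ b ∈ H, Commute (φ ^ i * a * (φ ^ i)⁻¹) (φ ^ j * b * (φ ^ j)⁻¹))
    {n : ℕ} (hn : n ≤ m + 1) (f g : Fin n → G) (hf : ∀ i, f i ∈ H) (hg : ∀ i, g i ∈ H) :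
    ∃ z u v : G, (List.ofFn fun i => ⁅f i, g i⁆).prod = ⁅z, φ⁆ * ⁅u, v⁆ := by
  set α := (MulAut.conj φ).toMonoidHom
  have displaces : Displaces α (H : Set G) m := displaces_conj_iff.2 hd
  have commutator_mem (i : Fin n) : ⁅f i, g i⁆ ∈ H :=
    H.commutator_le_self (Subgroup.commutator_mem_commutator (hf i) (hg i))
  obtain ⟨z, hz⟩ := displaces.exists_prod_eq_mul_translateProd
    (l := List.ofFn fun i => ⁅f i, g i⁆) (List.forall_mem_ofFn_iff.2 commutator_mem) (by simpa)
  have translateProd_eq := displaces.translateProd_commutatorElement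
    (l := List.ofFn fun i => (f i, g i))
    (List.forall_mem_ofFn_iff.2 fun i => ⟨hf i, hg i⟩) (by simpa)
  simp only [List.map_ofFn, Function.comp_def] at translateProd_eq
  have z_mul : z * (α z)⁻¹ = ⁅z, φ⁆ := by simp [α, commutatorElement_def, mul_assoc]
  exact ⟨z, _, _, by rw [hz, z_mul, translateProd_eq]⟩

end Group

/-- If some `φ ∈ G` strongly `m`-displaces the subgroup `H` (the conjugates
`φⁱHφ⁻ⁱ`, `i = 0,…,m`, pairwise commute elementwise), then any product of `m`
commutators of elements of `H` is a product of at most two commutators of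
elements of `G`. -/
theorem cl_le_two_of_m_displaceable {G : Type*} [Group G]
    (H : Subgroup G) (m : ℕ) (hm : 1 ≤ m) (φ : G)
    (hd : ∀ i j : ℕ, i ≤ m → j ≤ m → i ≠ j →
      ∀ a ∈ H, ∀ b ∈ H, Commute (φ ^ i * a * (φ ^ i)⁻¹) (φ ^ j * b * (φ ^ j)⁻¹))
    (x : G) (f g : Fin m → G) (hf : ∀ i, f i ∈ H) (hg : ∀ i, g i ∈ H)
    (hx : x = (List.ofFn fun i => ⁅f i, g i⁆).prod) :
    ∃ a b c d : G, x = ⁅a, b⁆ * ⁅c, d⁆ := by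
  obtain ⟨z, u, v, h⟩ := cl_le_two_of_m_displaceable_general H m φ hd m.le_succ f g hf hg
  exact ⟨z, φ, u, v, hx.trans h⟩
end

section
/- Let G be a group, H ≤ G a subgroup, m ≥ 1, and F ∈ G such that the subgroups FⁱHF⁻ⁱ, i = 0,1,…,m, pairwise commute elementwise. If g₀, g₁, …, g_m ∈ H satisfy g₀g₁⋯g_m = 1, then the product ∏_{i=0}^{m} Fⁱg_iF⁻ⁱ is an F-commutator; explicitly, it equals [F, φ⁻¹] where φ = ∏_{i=0}^{m-1} Fⁱφ_iF⁻ⁱ with φ_k = g₀g₁⋯g_k. -/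
open scoped commutatorElement

/-- An `F`-commutator: an element of the form `f[F,h]f⁻¹`. -/
def IsFCommutator {G : Type*} [Group G] (F x : G) : Prop :=
  ∃ f h : G, x = f * ⁅F, h⁆ * f⁻¹

/-!
Write `σ` for conjugation by `F`, `φ k = g 0 * ⋯ * g k`, `Φ n = ∏_{i < n} σⁱ (φ i)` and
`A n = ∏_{i < n} σⁱ (g i)`. The factors of `σ (Φ n) = ∏_{i < n} σⁱ⁺¹ (φ i)` can be moved through
`A (n + 1)` to meet the factors `σⁱ⁺¹ (g (i + 1))`, and `φ i * g (i + 1) = φ (i + 1)`, so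
`σ (Φ n) * A (n + 1) = Φ (n + 1)`. When `φ m = 1` we have `Φ (m + 1) = Φ m`, hence
`A (m + 1) = σ (Φ m)⁻¹ * Φ m = ⁅F, (Φ m)⁻¹⁆`.
-/

section Monoid

variable {M : Type*} [Monoid M]

/-- The ordered product `g 0 * g 1 * ⋯ * g (n - 1)` of the first `n` terms of a sequence in a
possibly noncommutative monoid, written with `List.ofFn` to agree with the products in
`prod_conj_eq_F_commutator`. -/
def prefixProd (g : ℕ → M) (n : ℕ) : M :=
  (List.ofFn fun i : Fin n => g i).prod

@[simp]
theorem prefixProd_zero (g : ℕ → M) : prefixProd g 0 = 1 := by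
  simp [prefixProd]

theorem prefixProd_succ (g : ℕ → M) (n : ℕ) :
    prefixProd g (n + 1) = prefixProd g n * g n := by
  simp only [prefixProd, List.ofFn_succ', List.prod_concat, Fin.val_castSucc, Fin.val_last]

theorem prefixProd_mem {S : Type*} [SetLike S M] [SubmonoidClass S M] {s : S} {g : ℕ → M} {n : ℕ}
    (hg : ∀ i < n, g i ∈ s) : prefixProd g n ∈ s :=
  list_prod_mem (List.forall_mem_ofFn_iff.2 fun i => hg i i.isLt)

theorem commute_prefixProd {x : M} {g : ℕ → M} {n : ℕ}
    (hg : ∀ i < n, Commute x (g i)) : Commute x (prefixProd g n) :=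
  Commute.list_prod_right _ _ (List.forall_mem_ofFn_iff.2 fun i => hg i i.isLt)

theorem map_prefixProd_iterate_mul_prefixProd_iterate {E : Type*} [FunLike E M M]
    [MonoidHomClass E M M] (σ : E) (g : ℕ → M) (n : ℕ)
    (hcomm : ∀ j k, j < k → k ≤ n → Commute (σ^[k] (prefixProd g k)) (σ^[j] (g j))) :
    σ (prefixProd (fun i => σ^[i] (prefixProd g (i + 1))) n) *
        prefixProd (fun i => σ^[i] (g i)) (n + 1) =
      prefixProd (fun i => σ^[i] (prefixProd g (i + 1))) (n + 1) := by
  induction n with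
  | zero => simp [prefixProd_succ]
  | succ n ih =>
    set Φ := prefixProd fun i => σ^[i] (prefixProd g (i + 1))
    set A := prefixProd fun i => σ^[i] (g i)
    have hΦ_succ (k : ℕ) : Φ (k + 1) = Φ k * σ^[k] (prefixProd g (k + 1)) := prefixProd_succ _ k
    have hA_succ : A (n + 2) = A (n + 1) * σ^[n + 1] (g (n + 1)) := prefixProd_succ _ (n + 1)
    have hmove : Commute (σ^[n + 1] (prefixProd g (n + 1))) (A (n + 1)) :=
      commute_prefixProd fun j hj => hcomm j (n + 1) hj le_rfl
    have ih : σ (Φ n) * A (n + 1) = Φ (n + 1) :=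
      ih fun j k hjk hk => hcomm j k hjk (Nat.le_succ_of_le hk)
    calc σ (Φ (n + 1)) * A (n + 2)
        = σ (Φ n) * (σ^[n + 1] (prefixProd g (n + 1)) * A (n + 1)) * σ^[n + 1] (g (n + 1)) := by
          rw [hΦ_succ, map_mul, ← Function.iterate_succ_apply' σ, hA_succ]
          simp only [mul_assoc]
      _ = σ (Φ n) * A (n + 1) *
            (σ^[n + 1] (prefixProd g (n + 1)) * σ^[n + 1] (g (n + 1))) := by
          rw [hmove.eq]
          simp only [mul_assoc]
      _ = Φ (n + 1) * σ^[n + 1] (prefixProd g (n + 2)) := by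
          rw [ih, ← iterate_map_mul, ← prefixProd_succ]
      _ = Φ (n + 2) := (hΦ_succ (n + 1)).symm

end Monoid

section Group

variable {G : Type*} [Group G]

theorem prefixProd_iterate_eq_inv_map_mul {E : Type*} [FunLike E G G] [MonoidHomClass E G G]
    (σ : E) (g : ℕ → G) (m : ℕ)
    (hcomm : ∀ j k, j < k → k ≤ m → Commute (σ^[k] (prefixProd g k)) (σ^[j] (g j)))
    (hprod : prefixProd g (m + 1) = 1) :
    prefixProd (fun i => σ^[i] (g i)) (m + 1) =
      (σ (prefixProd (fun i => σ^[i] (prefixProd g (i + 1))) m))⁻¹ *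
        prefixProd (fun i => σ^[i] (prefixProd g (i + 1))) m := by
  rw [eq_inv_mul_iff_mul_eq, map_prefixProd_iterate_mul_prefixProd_iterate σ g m hcomm,
    prefixProd_succ, hprod, iterate_map_one, mul_one]

theorem mulAut_conj_iterate_apply (F x : G) (n : ℕ) :
    (MulAut.conj F)^[n] x = F ^ n * x * (F ^ n)⁻¹ :=
  (smul_iterate_apply (MulAut.conj F) n x).trans <| by
    rw [← map_pow, MulAut.smul_def, MulAut.conj_apply]

theorem commutatorElement_inv_right_eq (F x : G) : ⁅F, x⁻¹⁆ = (MulAut.conj F x)⁻¹ * x := by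
  simp [commutatorElement_def, mul_assoc]

theorem isFCommutator_commutatorElement (F h : G) : IsFCommutator F ⁅F, h⁆ :=
  ⟨1, h, by simp⟩

theorem prod_conj_eq_F_commutator_general (m : ℕ) (F : G) (g : ℕ → G)
    (hcomm : ∀ j k, j < k → k ≤ m →
      Commute (F ^ k * prefixProd g k * (F ^ k)⁻¹) (F ^ j * g j * (F ^ j)⁻¹))
    (hprod : prefixProd g (m + 1) = 1) :
    prefixProd (fun i => F ^ i * g i * (F ^ i)⁻¹) (m + 1) =
        ⁅F, (prefixProd (fun i => F ^ i * prefixProd g (i + 1) * (F ^ i)⁻¹) m)⁻¹⁆ ∧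
      IsFCommutator F (prefixProd (fun i => F ^ i * g i * (F ^ i)⁻¹) (m + 1)) := by
  simp only [← mulAut_conj_iterate_apply] at hcomm ⊢
  rw [prefixProd_iterate_eq_inv_map_mul (MulAut.conj F) g m hcomm hprod,
    ← commutatorElement_inv_right_eq]
  exact ⟨rfl, isFCommutator_commutatorElement F _⟩

end Group

/-- If the conjugates `FⁱHF⁻ⁱ`, `i = 0,…,m`, pairwise commute elementwise and
`g₀g₁⋯g_m = 1` with all `g_i ∈ H`, then `∏_{i=0}^{m} Fⁱg_iF⁻ⁱ` is an
`F`-commutator; explicitly it equals `[F, φ⁻¹]` where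
`φ = ∏_{i=0}^{m-1} Fⁱ(g₀⋯g_i)F⁻ⁱ`. -/
theorem prod_conj_eq_F_commutator {G : Type*} [Group G]
    (H : Subgroup G) (m : ℕ) (hm : 1 ≤ m) (F : G)
    (hd : ∀ i j : ℕ, i ≤ m → j ≤ m → i ≠ j →
      ∀ a ∈ H, ∀ b ∈ H, Commute (F ^ i * a * (F ^ i)⁻¹) (F ^ j * b * (F ^ j)⁻¹))
    (g : ℕ → G) (hg : ∀ i ≤ m, g i ∈ H)
    (hprod : (List.ofFn fun i : Fin (m + 1) => g i).prod = 1) :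
    (List.ofFn fun i : Fin (m + 1) => F ^ (i : ℕ) * g i * (F ^ (i : ℕ))⁻¹).prod =
      ⁅F, ((List.ofFn fun i : Fin m =>
        F ^ (i : ℕ) * (List.ofFn fun j : Fin ((i : ℕ) + 1) => g j).prod *
          (F ^ (i : ℕ))⁻¹).prod)⁻¹⁆ ∧
    IsFCommutator F
      (List.ofFn fun i : Fin (m + 1) => F ^ (i : ℕ) * g i * (F ^ (i : ℕ))⁻¹).prod := by
  refine prod_conj_eq_F_commutator_general m F g (fun j k hjk hk => ?_) hprod
  have hprefix : prefixProd g k ∈ H := prefixProd_mem fun i hi => hg i (hi.le.trans hk)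
  exact hd k j hk (hjk.le.trans hk) hjk.ne' _ hprefix _ (hg j (hjk.le.trans hk))
end

section
/- Let G be a group, H ≤ G a subgroup, m ≥ 1, and F ∈ G such that the subgroups FⁱHF⁻ⁱ, i = 0,1,…,m, pairwise commute elementwise. Then for any g₁, g₂, …, g_m ∈ H, the product g_m g_{m-1} ⋯ g₁ equals an F-commutator times the product ∏_{i=1}^{m} Fⁱg_iF⁻ⁱ, i.e., there exists an F-commutator x with g_m⋯g₁ = x · ∏_{i=1}^{m} Fⁱg_iF⁻ⁱ. -/
open scoped commutatorElement

/-!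
In coordinates `Hᵐ⁺¹`, indexed by the pairwise commuting conjugates `FⁱHF⁻ⁱ`, conjugation by `F` is
a shift of any tuple whose last entry is `1`. The theorem thus asks for a tuple `u` with `uₘ = 1`
and `shift(u) · u⁻¹ · (1, g₁, …, gₘ) = (gₘ ⋯ g₁, 1, …, 1)`. Comparing entries gives
`uᵢ = gᵢ uᵢ₋₁`, whose solution is `uᵢ = (gₘ ⋯ gᵢ₊₁)⁻¹`.
-/

section NoncommPiCoprod

variable {M : Type*} [Monoid M] {n : ℕ}

theorem noncommProd_univ_eq_prod_ofFn (f : Fin n → M)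
    (comm : ((Finset.univ : Finset (Fin n)) : Set (Fin n)).Pairwise (Function.onFun Commute f)) :
    Finset.univ.noncommProd f comm = (List.ofFn f).prod := by
  simp only [Finset.noncommProd, Fin.univ_def, Multiset.map_coe, Multiset.noncommProd_coe,
    List.ofFn_eq_map]

theorem noncommPiCoprod_cons_one {N : Type*} [Monoid N] (φ : Fin (n + 1) → N →* M)
    (hφ : Pairwise fun i j ↦ ∀ x y, Commute (φ i x) (φ j y)) (v : Fin n → N) :
    MonoidHom.noncommPiCoprod φ hφ (Fin.cons 1 v : Fin (n + 1) → N) =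
      (List.ofFn fun i ↦ φ i.succ (v i)).prod := by
  simp [MonoidHom.noncommPiCoprod_apply, noncommProd_univ_eq_prod_ofFn]

theorem noncommPiCoprod_snoc_one {N : Type*} [Monoid N] (φ : Fin (n + 1) → N →* M)
    (hφ : Pairwise fun i j ↦ ∀ x y, Commute (φ i x) (φ j y)) (v : Fin n → N) :
    MonoidHom.noncommPiCoprod φ hφ (Fin.snoc v 1 : Fin (n + 1) → N) =
      (List.ofFn fun i ↦ φ i.castSucc (v i)).prod := by
  rw [MonoidHom.noncommPiCoprod_apply, noncommProd_univ_eq_prod_ofFn, List.ofFn_succ',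
    List.concat_eq_append, List.prod_append]
  simp

end NoncommPiCoprod

section RevTailProd

/-- The tail of `g` multiplied in decreasing order: `revTailProd g i = g (n - 1) * ⋯ * g i`,
with value `1` at `i = n`. The tuple of inverses of these products solves the shift equation. -/
def revTailProd {M : Type*} [Monoid M] {n : ℕ} (g : Fin n → M) (i : Fin (n + 1)) : M :=
  Fin.partialProd (g ∘ Fin.rev) i.rev

section Monoid

variable {M : Type*} [Monoid M] {n : ℕ} (g : Fin n → M)

theorem revTailProd_zero : revTailProd g 0 = (List.ofFn (g ∘ Fin.rev)).prod := by
  simp [revTailProd, Fin.partialProd, List.take_of_length_le]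

theorem revTailProd_last : revTailProd g (Fin.last n) = 1 := by
  simp [revTailProd]

theorem revTailProd_castSucc (i : Fin n) :
    revTailProd g i.castSucc = revTailProd g i.succ * g i := by
  simp [revTailProd, Fin.rev_castSucc, Fin.rev_succ, Fin.partialProd_succ]

end Monoid

variable {N : Type*} [Group N] {n : ℕ} (g : Fin n → N)

theorem snoc_inv_revTailProd_castSucc_one :
    (Fin.snoc (fun i ↦ (revTailProd g i.castSucc)⁻¹) 1 : Fin (n + 1) → N) =
      (revTailProd g)⁻¹ := by
  ext i
  cases i using Fin.lastCases <;> simp [revTailProd_last]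

theorem cons_one_inv_revTailProd_castSucc_mul_mul :
    (Fin.cons 1 (fun i ↦ (revTailProd g i.castSucc)⁻¹) : Fin (n + 1) → N) * revTailProd g *
      (Fin.cons 1 g : Fin (n + 1) → N) = Pi.mulSingle 0 (revTailProd g 0) := by
  ext i
  cases i using Fin.cases <;> simp [revTailProd_castSucc]

end RevTailProd

theorem conj_noncommPiCoprod_snoc_one {N G : Type*} [Monoid N] [Group G] {n : ℕ}
    {φ : Fin (n + 1) → N →* G} {F : G}
    (hφ : Pairwise fun i j ↦ ∀ x y, Commute (φ i x) (φ j y))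
    (hF : ∀ (i : Fin n) (x : N), F * φ i.castSucc x * F⁻¹ = φ i.succ x) (v : Fin n → N) :
    F * MonoidHom.noncommPiCoprod φ hφ (Fin.snoc v 1 : Fin (n + 1) → N) * F⁻¹ =
      MonoidHom.noncommPiCoprod φ hφ (Fin.cons 1 v : Fin (n + 1) → N) := by
  rw [noncommPiCoprod_snoc_one, noncommPiCoprod_cons_one, ← MulAut.conj_apply, map_list_prod,
    List.map_ofFn]
  simp only [Function.comp_def, MulAut.conj_apply, hF]

theorem exists_map_zero_prod_rev_eq_commutatorElement_mul {N G : Type*} [Group N] [Group G]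
    {n : ℕ} {φ : Fin (n + 1) → N →* G} {F : G}
    (hφ : Pairwise fun i j ↦ ∀ x y, Commute (φ i x) (φ j y))
    (hF : ∀ (i : Fin n) (x : N), F * φ i.castSucc x * F⁻¹ = φ i.succ x) (g : Fin n → N) :
    ∃ h : G, φ 0 (List.ofFn (g ∘ Fin.rev)).prod =
      ⁅F, h⁆ * (List.ofFn fun i ↦ φ i.succ (g i)).prod := by
  let Φ := MonoidHom.noncommPiCoprod φ hφ
  let v : Fin n → N := fun i ↦ (revTailProd g i.castSucc)⁻¹
  refine ⟨Φ (revTailProd g)⁻¹, ?_⟩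
  have shift : F * Φ (revTailProd g)⁻¹ * F⁻¹ = Φ (Fin.cons 1 v : Fin (n + 1) → N) := by
    rw [← snoc_inv_revTailProd_castSucc_one]
    exact conj_noncommPiCoprod_snoc_one hφ hF v
  calc φ 0 (List.ofFn (g ∘ Fin.rev)).prod
      = Φ (Pi.mulSingle 0 (revTailProd g 0)) := by
        rw [← revTailProd_zero, MonoidHom.noncommPiCoprod_mulSingle]
    _ = Φ (Fin.cons 1 v : Fin (n + 1) → N) * Φ (revTailProd g) *
          Φ (Fin.cons 1 g : Fin (n + 1) → N) := by
        rw [← map_mul, ← map_mul, cons_one_inv_revTailProd_castSucc_mul_mul]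
    _ = ⁅F, Φ (revTailProd g)⁻¹⁆ * (List.ofFn fun i ↦ φ i.succ (g i)).prod := by
        rw [commutatorElement_def, shift, ← map_inv, inv_inv, noncommPiCoprod_cons_one φ hφ g]

/-- If the conjugates `FⁱHF⁻ⁱ`, `i = 0,…,m`, pairwise commute elementwise, then
for `g₁,…,g_m ∈ H` the product `g_m g_{m-1} ⋯ g₁` equals an `F`-commutator
times `∏_{i=1}^{m} Fⁱg_iF⁻ⁱ`. -/
theorem rearrange_prod_F_commutator {G : Type*} [Group G]
    (H : Subgroup G) (m : ℕ) (hm : 1 ≤ m) (F : G)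
    (hd : ∀ i j : ℕ, i ≤ m → j ≤ m → i ≠ j →
      ∀ a ∈ H, ∀ b ∈ H, Commute (F ^ i * a * (F ^ i)⁻¹) (F ^ j * b * (F ^ j)⁻¹))
    (g : ℕ → G) (hg : ∀ i, 1 ≤ i → i ≤ m → g i ∈ H) :
    ∃ x : G, IsFCommutator F x ∧
      (List.ofFn fun k : Fin m => g (m - (k : ℕ))).prod =
        x * (List.ofFn fun k : Fin m =>
          F ^ ((k : ℕ) + 1) * g ((k : ℕ) + 1) * (F ^ ((k : ℕ) + 1))⁻¹).prod := by
  let φ (i : Fin (m + 1)) : H →* G := (MulAut.conj (F ^ (i : ℕ))).toMonoidHom.comp H.subtype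
  let gH (i : Fin m) : H := ⟨g (i + 1), hg _ (by lia) (by lia)⟩
  have hφ : Pairwise fun i j ↦ ∀ x y, Commute (φ i x) (φ j y) := fun i j hij x y ↦
    hd i j i.is_le j.is_le (Fin.val_ne_of_ne hij) x x.2 y y.2
  have hF (i : Fin m) (x : H) : F * φ i.castSucc x * F⁻¹ = φ i.succ x := by
    simp [φ, pow_succ', mul_assoc]
  obtain ⟨h, hh⟩ := exists_map_zero_prod_rev_eq_commutatorElement_mul hφ hF gH
  have hrev : φ 0 (List.ofFn (gH ∘ Fin.rev)).prod =
      (List.ofFn fun k : Fin m ↦ g (m - (k : ℕ))).prod := by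
    rw [map_list_prod, List.map_ofFn]
    congr! 3 with k
    have : m - (k + 1) + 1 = m - k := by lia
    simp [φ, gH, this]
  exact ⟨⁅F, h⁆, ⟨1, h, by simp⟩, hrev ▸ hh⟩
end

section
/- Let G be a group, H ≤ G a subgroup, and suppose there exist elements g₁ = 1, g₂, …, g_N ∈ G such that the subgroups g_iHg_i⁻¹, i = 1,…,N, pairwise commute elementwise. Then every homogeneous quasi-morphism φ on G satisfies sup_{x,y ∈ G} φ([x,y]) ≥ N · sup_{x,y ∈ H} φ([x,y]). -/
open scoped commutatorElement

/-!
Homogeneity turns a bounded error into an equality, since the error of the `n`-th powers is `n`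
times the original one. Hence a homogeneous quasi-morphism `φ` is invariant under conjugation and
additive on commuting elements. As the conjugates `gᵢHgᵢ⁻¹` commute pairwise,
`(hᵢ)ᵢ ↦ ∏ᵢ gᵢhᵢgᵢ⁻¹` is a group homomorphism from a power of `H` to `G`. It sends the commutator
of the constant families `x` and `y` to a commutator in `G`, on which `φ` takes the value
`∑ᵢ φ(gᵢ[x,y]gᵢ⁻¹) = N φ([x,y])`. So `N` times every value of `φ` on a commutator of `H` is the
value of `φ` on a commutator of `G`.
-/

theorem eq_zero_of_forall_nsmul_abs_le {M : Type*} [AddCommGroup M] [LinearOrder M]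
    [IsOrderedAddMonoid M] [Archimedean M] {x C : M} (h : ∀ n : ℕ, n • |x| ≤ C) : x = 0 := by
  by_contra hx
  obtain ⟨n, hn⟩ := exists_lt_nsmul (abs_pos.mpr hx) C
  exact (h n).not_gt hn

/-- A homogeneous quasi-morphism `φ : G → ℝ`: additive up to a bounded error, and homogeneous
under integer powers. The bound on the defect is only asserted to exist. -/
structure IsHomogeneousQuasimorphism_s15 {G : Type*} [Group G] (φ : G → ℝ) : Prop where
  exists_abs_map_mul_sub_le : ∃ C : ℝ, ∀ a b : G, |φ (a * b) - φ a - φ b| ≤ C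
  map_zpow : ∀ (a : G) (n : ℤ), φ (a ^ n) = n * φ a

namespace IsHomogeneousQuasimorphism_s15

variable {G : Type*} [Group G] {φ : G → ℝ}

theorem map_pow (hφ : IsHomogeneousQuasimorphism_s15 φ) (a : G) (n : ℕ) : φ (a ^ n) = n * φ a := by
  simpa using hφ.map_zpow a n

theorem map_one (hφ : IsHomogeneousQuasimorphism_s15 φ) : φ 1 = 0 := by
  simpa using hφ.map_pow 1 0

theorem map_inv (hφ : IsHomogeneousQuasimorphism_s15 φ) (a : G) : φ a⁻¹ = -φ a := by
  simpa using hφ.map_zpow a (-1)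

theorem map_mul_of_commute (hφ : IsHomogeneousQuasimorphism_s15 φ) {a b : G} (hab : Commute a b) :
    φ (a * b) = φ a + φ b := by
  obtain ⟨C, hC⟩ := hφ.exists_abs_map_mul_sub_le
  suffices φ (a * b) - φ a - φ b = 0 by linarith
  refine eq_zero_of_forall_nsmul_abs_le (C := C) fun n => ?_
  calc n • |φ (a * b) - φ a - φ b|
      = |φ (a ^ n * b ^ n) - φ (a ^ n) - φ (b ^ n)| := by
        simp only [← hab.mul_pow, hφ.map_pow, ← mul_sub, abs_mul, Nat.abs_cast, nsmul_eq_mul]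
    _ ≤ C := hC _ _

theorem exists_abs_map_conj_sub_le (hφ : IsHomogeneousQuasimorphism_s15 φ) :
    ∃ C : ℝ, ∀ c a : G, |φ (c * a * c⁻¹) - φ a| ≤ C := by
  obtain ⟨C, hC⟩ := hφ.exists_abs_map_mul_sub_le
  refine ⟨C + C, fun c a => ?_⟩
  calc |φ (c * a * c⁻¹) - φ a|
      = |(φ (c * a * c⁻¹) - φ (c * a) - φ c⁻¹) + (φ (c * a) - φ c - φ a)| := by
        rw [hφ.map_inv]
        ring_nf
    _ ≤ C + C := (abs_add_le _ _).trans (add_le_add (hC _ _) (hC _ _))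

theorem map_conj (hφ : IsHomogeneousQuasimorphism_s15 φ) (c a : G) : φ (c * a * c⁻¹) = φ a := by
  obtain ⟨C, hC⟩ := hφ.exists_abs_map_conj_sub_le
  refine sub_eq_zero.mp (eq_zero_of_forall_nsmul_abs_le (C := C) fun n => ?_)
  calc n • |φ (c * a * c⁻¹) - φ a|
      = |φ (c * a ^ n * c⁻¹) - φ (a ^ n)| := by
        simp only [← conj_pow, hφ.map_pow, ← mul_sub, abs_mul, Nat.abs_cast, nsmul_eq_mul]
    _ ≤ C := hC _ _

theorem bddAbove_map_commutatorElement (hφ : IsHomogeneousQuasimorphism_s15 φ) :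
    BddAbove {r : ℝ | ∃ x y : G, r = φ ⁅x, y⁆} := by
  obtain ⟨C, hC⟩ := hφ.exists_abs_map_mul_sub_le
  refine ⟨C, ?_⟩
  rintro _ ⟨x, y, rfl⟩
  calc φ ⁅x, y⁆ = φ (x * y * x⁻¹ * y⁻¹) - φ (x * y * x⁻¹) - φ y⁻¹ := by
        rw [commutatorElement_def, hφ.map_conj, hφ.map_inv]
        ring
    _ ≤ C := (le_abs_self _).trans (hC _ _)

theorem map_noncommProd {ι : Type*} (hφ : IsHomogeneousQuasimorphism_s15 φ) (s : Finset ι) (f : ι → G)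
    (comm : (s : Set ι).Pairwise (Function.onFun Commute f)) :
    φ (s.noncommProd f comm) = ∑ i ∈ s, φ (f i) := by
  induction s using Finset.cons_induction with
  | empty => simpa using hφ.map_one
  | cons i s hi ih =>
    have hcomm_i : ∀ j ∈ s, Commute (f i) (f j) := fun j hj =>
      comm (Finset.mem_cons_self i s) (Finset.mem_cons_of_mem hj) (ne_of_mem_of_not_mem hj hi).symm
    rw [Finset.noncommProd_cons,
      hφ.map_mul_of_commute (Finset.noncommProd_commute _ _ _ _ hcomm_i), ih, Finset.sum_cons]

theorem map_noncommPiCoprod {ι : Type*} [Fintype ι] {K : ι → Type*} [∀ i, Monoid (K i)]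
    (hφ : IsHomogeneousQuasimorphism_s15 φ) (f : ∀ i, K i →* G)
    (hf : Pairwise fun i j => ∀ x y, Commute (f i x) (f j y)) (x : ∀ i, K i) :
    φ (MonoidHom.noncommPiCoprod f hf x) = ∑ i, φ (f i (x i)) :=
  hφ.map_noncommProd Finset.univ (fun i => f i (x i)) fun _ _ _ _ hij => hf hij _ _

theorem exists_map_commutatorElement_eq_sum {ι : Type*} [Fintype ι] {K : ι → Type*}
    [∀ i, Group (K i)] (hφ : IsHomogeneousQuasimorphism_s15 φ) (f : ∀ i, K i →* G)
    (hf : Pairwise fun i j => ∀ x y, Commute (f i x) (f j y)) (x y : ∀ i, K i) :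
    ∃ X Y : G, φ ⁅X, Y⁆ = ∑ i, φ (f i ⁅x i, y i⁆) := by
  let F := MonoidHom.noncommPiCoprod f hf
  refine ⟨F x, F y, ?_⟩
  rw [← map_commutatorElement]
  exact hφ.map_noncommPiCoprod f hf ⁅x, y⁆

theorem exists_map_commutatorElement_eq_card_mul {ι : Type*} [Fintype ι]
    (hφ : IsHomogeneousQuasimorphism_s15 φ) {H : Subgroup G} {g : ι → G}
    (hg : Pairwise fun i j =>
      ∀ a ∈ H, ∀ b ∈ H, Commute (g i * a * (g i)⁻¹) (g j * b * (g j)⁻¹))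
    (x y : H) : ∃ X Y : G, φ ⁅X, Y⁆ = Fintype.card ι * φ ⁅(x : G), (y : G)⁆ := by
  let conjHom (i : ι) : H →* G := (MulAut.conj (g i)).toMonoidHom.comp H.subtype
  have hconj : Pairwise fun i j => ∀ a b, Commute (conjHom i a) (conjHom j b) :=
    fun i j hij a b => hg hij a a.2 b b.2
  obtain ⟨X, Y, hXY⟩ := hφ.exists_map_commutatorElement_eq_sum conjHom hconj
    (fun _ => x) (fun _ => y)
  have map_conjHom (i : ι) : φ (conjHom i ⁅x, y⁆) = φ ⁅(x : G), (y : G)⁆ :=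
    hφ.map_conj (g i) ⁅(x : G), (y : G)⁆
  refine ⟨X, Y, ?_⟩
  simp only [hXY, map_conjHom, Finset.sum_const, Finset.card_univ, nsmul_eq_mul]

end IsHomogeneousQuasimorphism_s15

open scoped Pointwise in
theorem sup_commutator_quasimorphism_ge_of_packing_general {G ι : Type*} [Group G] [Fintype ι]
    (H : Subgroup G) (g : ι → G)
    (hg : Pairwise fun i j =>
      ∀ a ∈ H, ∀ b ∈ H, Commute (g i * a * (g i)⁻¹) (g j * b * (g j)⁻¹))
    {φ : G → ℝ} (hφ : IsHomogeneousQuasimorphism_s15 φ) :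
    (Fintype.card ι : ℝ) * sSup {r : ℝ | ∃ x ∈ H, ∃ y ∈ H, r = φ ⁅x, y⁆} ≤
      sSup {r : ℝ | ∃ x y : G, r = φ ⁅x, y⁆} := by
  rw [← smul_eq_mul, ← Real.sSup_smul_of_nonneg (Nat.cast_nonneg _)]
  refine csSup_le_csSup hφ.bddAbove_map_commutatorElement
    (Set.Nonempty.smul_set ⟨_, 1, H.one_mem, 1, H.one_mem, rfl⟩) ?_
  rintro _ ⟨_, ⟨x, hx, y, hy, rfl⟩, rfl⟩
  obtain ⟨X, Y, hXY⟩ := hφ.exists_map_commutatorElement_eq_card_mul hg ⟨x, hx⟩ ⟨y, hy⟩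
  exact ⟨X, Y, hXY.symm⟩

/-- If `g₁ = 1, g₂, …, g_N ∈ G` are such that the conjugates `gᵢHgᵢ⁻¹`
pairwise commute elementwise, then every homogeneous quasi-morphism `φ` on `G`
satisfies `sup_{x,y ∈ G} φ([x,y]) ≥ N · sup_{x,y ∈ H} φ([x,y])`. -/
theorem sup_commutator_quasimorphism_ge_of_packing {G : Type*} [Group G]
    (H : Subgroup G) (N : ℕ) (hN : 0 < N)
    (g : Fin N → G) (hg1 : g ⟨0, hN⟩ = 1)
    (hcomm : ∀ i j : Fin N, i ≠ j →
      ∀ a ∈ H, ∀ b ∈ H, Commute (g i * a * (g i)⁻¹) (g j * b * (g j)⁻¹))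
    (φ : G → ℝ)
    (hqm : ∃ C : ℝ, ∀ a b : G, |φ (a * b) - φ a - φ b| ≤ C)
    (hhom : ∀ (a : G) (n : ℤ), φ (a ^ n) = n * φ a) :
    (N : ℝ) * sSup {r : ℝ | ∃ x ∈ H, ∃ y ∈ H, r = φ ⁅x, y⁆} ≤
      sSup {r : ℝ | ∃ x y : G, r = φ ⁅x, y⁆} := by
  simpa only [Fintype.card_fin] using
    sup_commutator_quasimorphism_ge_of_packing_general H g hcomm ⟨hqm, hhom⟩
end

section
/- The infinite dihedral group Aff(ℤ) — the extension of ℤ by an element t with t² = 1 and tzt⁻¹ = z⁻¹ for the generator z of ℤ — is a bounded group: every conjugation-invariant norm on it is bounded. (Key fact used: t is conjugate to tz^{2n} for every integer n, via conjugation by zⁿ.) -/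
/-!
Conjugating the reflection `sr i` by a rotation shifts `i` by an arbitrary even amount, so every
reflection is conjugate to `sr 0` or to `sr 1`. Since every rotation is a product of two
reflections, a conjugation-invariant subadditive function is bounded by twice the larger of its
values at `sr 0` and `sr 1`.
-/

open DihedralGroup

theorem map_eq_of_isConj {G α : Type*} [Group G] {ν : G → α}
    (hconj : ∀ f g : G, ν (g * f * g⁻¹) = ν f) {a b : G} (hab : IsConj a b) : ν a = ν b := by
  obtain ⟨c, rfl⟩ := isConj_iff.mp hab
  exact (hconj a c).symm

theorem map_one_nonneg_of_subadditive {M : Type*} [MulOneClass M] {ν : M → ℝ}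
    (hmul : ∀ f g : M, ν (f * g) ≤ ν f + ν g) : 0 ≤ ν 1 := by
  simpa only [mul_one, le_add_iff_nonneg_right] using hmul 1 1

section Dihedral

variable {n : ℕ}

theorem isConj_sr_sr_add_two_mul (i k : ZMod n) : IsConj (sr i) (sr (i + 2 * k)) := by
  refine isConj_iff.mpr ⟨r (-k), ?_⟩
  rw [inv_r, r_mul_sr, sr_mul_r]
  ring_nf

theorem isConj_sr_zero_or_isConj_sr_one (i : ZMod n) :
    IsConj (sr 0) (sr i) ∨ IsConj (sr 1) (sr i) := by
  obtain ⟨m, rfl⟩ := ZMod.intCast_surjective i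
  obtain ⟨k, rfl | rfl⟩ := Int.even_or_odd' m
  · left
    simpa using isConj_sr_sr_add_two_mul 0 (k : ZMod n)
  · right
    simpa [add_comm] using isConj_sr_sr_add_two_mul 1 (k : ZMod n)

theorem map_sr_le_max {α : Type*} [LinearOrder α] {ν : DihedralGroup n → α}
    (hconj : ∀ f g, ν (g * f * g⁻¹) = ν f) (i : ZMod n) :
    ν (sr i) ≤ max (ν (sr 0)) (ν (sr 1)) := by
  rcases isConj_sr_zero_or_isConj_sr_one i with h | h
  · exact (map_eq_of_isConj hconj h).ge.trans (le_max_left _ _)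
  · exact (map_eq_of_isConj hconj h).ge.trans (le_max_right _ _)

theorem infinite_dihedral_bounded_general {ν : DihedralGroup n → ℝ}
    (hmul : ∀ f g, ν (f * g) ≤ ν f + ν g) (hconj : ∀ f g, ν (g * f * g⁻¹) = ν f)
    (g : DihedralGroup n) : ν g ≤ 2 * max (ν (sr 0)) (ν (sr 1)) := by
  set C := max (ν (sr 0)) (ν (sr 1))
  have rotation_le (i : ZMod n) : ν (r i) ≤ 2 * C :=
    calc
      ν (r i) = ν (sr 0 * sr i) := by rw [sr_mul_sr, sub_zero]
      _ ≤ ν (sr 0) + ν (sr i) := hmul _ _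
      _ ≤ C + C := add_le_add (map_sr_le_max hconj 0) (map_sr_le_max hconj i)
      _ = 2 * C := (two_mul C).symm
  have two_mul_nonneg : 0 ≤ 2 * C := (map_one_nonneg_of_subadditive hmul).trans (rotation_le 0)
  rcases g with i | i
  · exact rotation_le i
  · have reflection_le : ν (sr i) ≤ C := map_sr_le_max hconj i
    linarith

end Dihedral

/-- The infinite dihedral group `ℤ ⋊ ℤ/2` (realized as `DihedralGroup 0`,
since `ZMod 0 = ℤ`) is bounded: every conjugation-invariant norm on it is
bounded. -/
theorem infinite_dihedral_bounded (ν : DihedralGroup 0 → ℝ)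
    (hν : IsConjInvNorm ν) : ∃ C : ℝ, ∀ g : DihedralGroup 0, ν g ≤ C := by
  obtain ⟨-, -, -, hmul, hconj, -⟩ := hν
  exact ⟨_, infinite_dihedral_bounded_general hmul hconj⟩
end
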